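/- arXiv:2506.12171 — 9 statements merged into one kernel-verified Lean document; each statement's English description precedes it below -/
import Mathlib

section
/- For s ∈ ℝ^d, the set {⟨s, α⟩ − F(α) : α ∈ ℝ^d} is bounded above if and only if s belongs to the Newton polytope N; moreover the surface tension σ (which is thus real-valued on N) is strictly convex on the entire closed polytope N. -/
/-- The free energy `F(α) = log(Σ_{j=1}^D exp(⟨e_j, α⟩))` of the multinomial dimer model. -/
noncomputable def freeEnergy (d D : ℕ) (e : Fin D → (Fin d → ℝ)) (α : Fin d → ℝ) : ℝ :=
  Real.log (∑ j, Real.exp (∑ i, e j i * α i))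

/-- The surface tension `σ(s) = sup_{α ∈ ℝ^d} (⟨s, α⟩ − F(α))`, the Legendre dual of `F`. -/
noncomputable def surfTension (d D : ℕ) (e : Fin D → (Fin d → ℝ)) (s : Fin d → ℝ) : ℝ :=
  sSup (Set.range fun α : Fin d → ℝ => (∑ i, s i * α i) - freeEnergy d D e α)

/-!
Write `H(p) = ∑ pⱼ log pⱼ` and `L(p) = ∑ pⱼ eⱼ` for `p` in the standard simplex. By Gibbs'
inequality the free energy is itself a supremum, `F(α) = max_p (⟨L(p), α⟩ - H(p))`, attained at the
Gibbs weights. Exchanging `sup_α` with `min_p` by Sion's minimax theorem gives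
`σ(s) = min {H(p) | L(p) = s}`: the supremum over `α` of `⟨s - L(p), α⟩ + H(p)` is infinite unless
`L(p) = s`. Hence `σ` is finite exactly on the image of the simplex, which is `N`, and it inherits
strict convexity from `H` because the minimum is attained.
-/

section Minimax

variable {E F β : Type*} [TopologicalSpace E] [AddCommGroup E] [IsTopologicalAddGroup E]
  [Module ℝ E] [ContinuousSMul ℝ E] [TopologicalSpace F] [AddCommGroup F]
  [IsTopologicalAddGroup F] [Module ℝ F] [ContinuousSMul ℝ F] [LinearOrder β] [DenselyOrdered β]

theorem exists_forall_le_of_forall_exists_le {X : Set E} {Y : Set F} {f : E → F → β} {c : β}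
    (neX : X.Nonempty) (cX : Convex ℝ X) (kX : IsCompact X) (cY : Convex ℝ Y)
    (hfy : ∀ y ∈ Y, LowerSemicontinuousOn (f · y) X) (hfy' : ∀ y ∈ Y, QuasiconvexOn ℝ X (f · y))
    (hfx : ∀ x ∈ X, UpperSemicontinuousOn (f x) Y) (hfx' : ∀ x ∈ X, QuasiconcaveOn ℝ Y (f x))
    (h : ∀ y ∈ Y, ∃ x ∈ X, f x y ≤ c) : ∃ x ∈ X, ∀ y ∈ Y, f x y ≤ c := by
  by_contra! hlt
  choose! y hyY hy using hlt
  obtain ⟨t, htX, ht⟩ := kX.elim_nhdsWithin_subcover (fun x => {x' | c < f x' (y x)})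
    fun x hx => hfy (y x) (hyY x hx) x hx c (hy x hx)
  have hfinite : ∀ x ∈ X, ∃ z ∈ y '' t, c < f x z := fun x hx => by
    simpa using ht hx
  obtain ⟨y₀, hy₀, hlt⟩ := Sion.exists_lt_iInf_of_lt_iInf_of_finite neX kX hfy hfy' cY hfx hfx' cX
    (t.finite_toSet.image y) (Set.image_subset_iff.2 fun x hx => hyY x (htX x hx)) hfinite
  obtain ⟨x, hx, hle⟩ := h y₀ hy₀
  exact hle.not_gt (hlt x hx)

end Minimax

theorem eq_zero_of_forall_mem_submodule_le {𝕜 E : Type*} [Field 𝕜] [LinearOrder 𝕜]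
    [IsStrictOrderedRing 𝕜] [AddCommGroup E] [Module 𝕜 E] {W : Submodule 𝕜 E} {f : E →ₗ[𝕜] 𝕜}
    {C : 𝕜} (h : ∀ y ∈ W, f y ≤ C) {y : E} (hy : y ∈ W) : f y = 0 := by
  by_contra hfy
  have hle := h (((C + 1) / f y) • y) (W.smul_mem _ hy)
  rw [map_smul, smul_eq_mul, div_mul_cancel₀ _ hfy] at hle
  exact (lt_add_one C).not_ge hle

theorem strictConvexOn_image_of_le_iff {𝕜 E F β : Type*} [Semiring 𝕜] [PartialOrder 𝕜]
    [AddCommMonoid E] [AddCommMonoid F] [AddCommMonoid β] [PartialOrder β]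
    [IsOrderedAddMonoid β] [Module 𝕜 E] [Module 𝕜 F] [Module 𝕜 β] [PosSMulMono 𝕜 β]
    {K : Set E} {h : E → β} (hh : StrictConvexOn 𝕜 K h) (L : E →ₗ[𝕜] F) {g : F → β}
    (hg : ∀ s ∈ L '' K, ∀ c, g s ≤ c ↔ ∃ p ∈ K, L p = s ∧ h p ≤ c) :
    StrictConvexOn 𝕜 (L '' K) g := by
  have hconv := hh.1.linear_image L
  refine ⟨hconv, fun x hx y hy hxy a b ha hb hab => ?_⟩
  obtain ⟨p, hp, rfl, hpx⟩ := (hg x hx _).1 le_rfl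
  obtain ⟨q, hq, rfl, hqy⟩ := (hg y hy _).1 le_rfl
  calc g (a • L p + b • L q) ≤ h (a • p + b • q) :=
        (hg _ (hconv hx hy ha.le hb.le hab) _).2
          ⟨_, hh.1 hp hq ha.le hb.le hab, by simp, le_rfl⟩
    _ < a • h p + b • h q := hh.2 hp hq (ne_of_apply_ne L hxy) ha hb hab
    _ ≤ a • g (L p) + b • g (L q) := by gcongr

section Gibbs

open Real Set

variable {ι : Type*} [Fintype ι]

theorem image_stdSimplex_linearCombination {R E : Type*} [Field R] [LinearOrder R]
    [IsStrictOrderedRing R] [AddCommGroup E] [Module R E] (e : ι → E) :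
    Fintype.linearCombination R e '' stdSimplex R ι = convexHull R (range e) := by
  classical
  rw [← convexHull_rangle_single_eq_stdSimplex, LinearMap.image_convexHull, ← range_comp]
  congr 2
  ext j
  simp

theorem dotProduct_apply_eq_apply_linearCombination {R E F : Type*} [CommSemiring R]
    [AddCommMonoid E] [Module R E] [AddCommMonoid F] [Module R F] (B : E →ₗ[R] F →ₗ[R] R)
    (p : ι → R) (e : ι → E) (α : F) :
    (p ⬝ᵥ fun j => B (e j) α) = B (Fintype.linearCombination R e p) α := by
  simp [Fintype.linearCombination_apply, dotProduct]

/-- The negative `∑ j, p j * log (p j)` of the Shannon entropy of the weights `p`; a vanishing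
weight contributes `0`, since `Real.log 0 = 0`. -/
noncomputable def negEntropy (p : ι → ℝ) : ℝ := ∑ j, p j * log (p j)

/-- The log-sum-exp function, the convex conjugate of `negEntropy` restricted to the simplex.
The free energy of the vectors `e j` is `α ↦ logSumExp fun j => ⟨e j, α⟩`. -/
noncomputable def logSumExp (x : ι → ℝ) : ℝ := log (∑ j, exp (x j))

/-- The Gibbs weights with energies `-x`, at which `p ↦ p ⬝ᵥ x - negEntropy p` attains its maximum
`logSumExp x` over the simplex. -/
noncomputable def softmax (x : ι → ℝ) (j : ι) : ℝ := exp (x j) / ∑ k, exp (x k)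

theorem continuous_negEntropy : Continuous (negEntropy : (ι → ℝ) → ℝ) :=
  continuous_finsetSum _ fun j _ => continuous_mul_log.comp (continuous_apply j)

theorem strictConvexOn_negEntropy : StrictConvexOn ℝ (Ici 0) (negEntropy : (ι → ℝ) → ℝ) := by
  refine ⟨convex_Ici 0, fun p hp q hq hpq a b ha hb hab => ?_⟩
  obtain ⟨k, hk⟩ := Function.ne_iff.1 hpq
  simp only [negEntropy, smul_eq_mul, Finset.mul_sum, ← Finset.sum_add_distrib]
  exact Finset.sum_lt_sum
    (fun j _ => convexOn_mul_log.2 (hp j) (hq j) ha.le hb.le hab)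
    ⟨k, Finset.mem_univ k, strictConvexOn_mul_log.2 (hp k) (hq k) hk ha hb hab⟩

theorem strictConvexOn_negEntropy_stdSimplex :
    StrictConvexOn ℝ (stdSimplex ℝ ι) negEntropy :=
  strictConvexOn_negEntropy.subset (fun _ hp => hp.1) (convex_stdSimplex ℝ ι)

theorem sub_le_mul_log_sub_log {p q : ℝ} (hp : 0 ≤ p) (hq : 0 < q) :
    p - q ≤ p * (log p - log q) := by
  obtain rfl | hp := hp.eq_or_lt
  · simpa using hq.le
  · calc p - q = p * (1 - (p / q)⁻¹) := by field_simp
      _ ≤ p * log (p / q) := by gcongr; exact one_sub_inv_le_log_of_pos (div_pos hp hq)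
      _ = p * (log p - log q) := by rw [log_div hp.ne' hq.ne']

theorem sum_mul_log_le_negEntropy {p q : ι → ℝ} (hp : p ∈ stdSimplex ℝ ι) (hq : ∀ j, 0 < q j)
    (hq_sum : ∑ j, q j ≤ 1) : ∑ j, p j * log (q j) ≤ negEntropy p := by
  have hsum : ∑ j, (p j - q j) ≤ ∑ j, p j * (log (p j) - log (q j)) :=
    Finset.sum_le_sum fun j _ => sub_le_mul_log_sub_log (hp.1 j) (hq j)
  simp only [mul_sub, Finset.sum_sub_distrib, hp.2] at hsum
  unfold negEntropy
  linarith

theorem logSumExp_sub_const [Nonempty ι] (x : ι → ℝ) (c : ℝ) :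
    logSumExp (fun j => x j - c) = logSumExp x - c := by
  have hpos : 0 < ∑ j, exp (x j) := by positivity
  simp only [logSumExp, exp_sub, ← Finset.sum_div]
  rw [log_div hpos.ne' (exp_ne_zero c), log_exp]

variable [Nonempty ι]

theorem softmax_pos (x : ι → ℝ) (j : ι) : 0 < softmax x j := by
  unfold softmax
  positivity

theorem sum_softmax (x : ι → ℝ) : ∑ j, softmax x j = 1 := by
  have hpos : 0 < ∑ j, exp (x j) := by positivity
  simp only [softmax, ← Finset.sum_div, div_self hpos.ne']

theorem softmax_mem_stdSimplex (x : ι → ℝ) : softmax x ∈ stdSimplex ℝ ι :=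
  ⟨fun j => (softmax_pos x j).le, sum_softmax x⟩

theorem log_softmax (x : ι → ℝ) (j : ι) : log (softmax x j) = x j - logSumExp x := by
  have hpos : 0 < ∑ k, exp (x k) := by positivity
  rw [softmax, log_div (exp_ne_zero _) hpos.ne', log_exp, logSumExp]

theorem sum_mul_log_softmax {p : ι → ℝ} (hp : p ∈ stdSimplex ℝ ι) (x : ι → ℝ) :
    ∑ j, p j * log (softmax x j) = p ⬝ᵥ x - logSumExp x := by
  simp only [log_softmax, mul_sub, Finset.sum_sub_distrib, ← Finset.sum_mul, hp.2, one_mul,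
    dotProduct]

theorem dotProduct_sub_logSumExp_le_negEntropy {p : ι → ℝ} (hp : p ∈ stdSimplex ℝ ι) (x : ι → ℝ) :
    p ⬝ᵥ x - logSumExp x ≤ negEntropy p :=
  sum_mul_log_softmax hp x ▸ sum_mul_log_le_negEntropy hp (softmax_pos x) (sum_softmax x).le

theorem negEntropy_softmax (x : ι → ℝ) :
    negEntropy (softmax x) = softmax x ⬝ᵥ x - logSumExp x :=
  sum_mul_log_softmax (softmax_mem_stdSimplex x) x

theorem exists_forall_negEntropy_sub_dotProduct_le {W : Set (ι → ℝ)} (hW : Convex ℝ W) {c : ℝ}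
    (h : ∀ y ∈ W, -logSumExp y ≤ c) :
    ∃ p ∈ stdSimplex ℝ ι, ∀ y ∈ W, negEntropy p - p ⬝ᵥ y ≤ c := by
  have hconv (y : ι → ℝ) : ConvexOn ℝ (stdSimplex ℝ ι) fun p => negEntropy p - p ⬝ᵥ y :=
    strictConvexOn_negEntropy_stdSimplex.convexOn.sub
      (((dotProductBilin ℝ ℝ).flip y).concaveOn (convex_stdSimplex ℝ ι))
  have hconc (p : ι → ℝ) : ConcaveOn ℝ W fun y => negEntropy p - p ⬝ᵥ y :=
    (concaveOn_const _ hW).sub ((dotProductBilin ℝ ℝ p).convexOn hW)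
  have hcont_left (y : ι → ℝ) : Continuous fun p => negEntropy p - p ⬝ᵥ y :=
    continuous_negEntropy.sub (by fun_prop)
  have hcont_right (p : ι → ℝ) : Continuous fun y => negEntropy p - p ⬝ᵥ y := by fun_prop
  refine exists_forall_le_of_forall_exists_le
    ⟨_, softmax_mem_stdSimplex 0⟩ (convex_stdSimplex ℝ ι) (isCompact_stdSimplex ℝ ι) hW
    (fun y _ => (hcont_left y).lowerSemicontinuous.lowerSemicontinuousOn _)
    (fun y _ => (hconv y).quasiconvexOn)
    (fun p _ => (hcont_right p).upperSemicontinuous.upperSemicontinuousOn _)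
    (fun p _ => (hconc p).quasiconcaveOn) fun y hy => ⟨softmax y, softmax_mem_stdSimplex y, ?_⟩
  simpa [negEntropy_softmax] using h y hy

theorem exists_negEntropy_le_of_submodule {W : Submodule ℝ (ι → ℝ)} {c : ℝ}
    (h : ∀ y ∈ W, -logSumExp y ≤ c) :
    ∃ p ∈ stdSimplex ℝ ι, (∀ y ∈ W, p ⬝ᵥ y = 0) ∧ negEntropy p ≤ c := by
  obtain ⟨p, hp, hpW⟩ := exists_forall_negEntropy_sub_dotProduct_le W.convex h
  refine ⟨p, hp, fun y hy => ?_, by simpa using hpW 0 W.zero_mem⟩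
  have hle : ∀ z ∈ W, -dotProductBilin ℝ ℝ p z ≤ c - negEntropy p := fun z hz => by
    rw [dotProductBilin_apply_apply]
    linarith [hpW z hz]
  simpa using eq_zero_of_forall_mem_submodule_le (f := -dotProductBilin ℝ ℝ p) hle hy

variable {E F : Type*} [AddCommGroup E] [Module ℝ E] [AddCommGroup F] [Module ℝ F]
  {B : E →ₗ[ℝ] F →ₗ[ℝ] ℝ}

theorem forall_sub_logSumExp_le_iff (hB : B.SeparatingLeft) (e : ι → E) (s : E) (c : ℝ) :
    (∀ α, B s α - logSumExp (fun j => B (e j) α) ≤ c) ↔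
      ∃ p ∈ stdSimplex ℝ ι, Fintype.linearCombination ℝ e p = s ∧ negEntropy p ≤ c := by
  constructor
  · intro h
    -- Weights have total mass one, so replacing `e j` by `e j - s` turns the constraint
    -- `∑ j, p j • e j = s` into orthogonality to a subspace.
    let W := LinearMap.range (LinearMap.pi fun j => B (e j - s))
    have hW : ∀ y ∈ W, -logSumExp y ≤ c := by
      rintro _ ⟨α, rfl⟩
      have hshift : LinearMap.pi (fun j => B (e j - s)) α = fun j => B (e j) α - B s α := by
        ext j; simp
      rw [hshift, logSumExp_sub_const, neg_sub]
      exact h α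
    obtain ⟨p, hp, hpW, hpc⟩ := exists_negEntropy_le_of_submodule hW
    refine ⟨p, hp, sub_eq_zero.1 (hB _ fun α => ?_), hpc⟩
    have horth : (p ⬝ᵥ fun j => B (e j - s) α) = 0 := hpW _ ⟨α, rfl⟩
    rw [dotProduct_apply_eq_apply_linearCombination] at horth
    rw [← horth]
    congr 2
    simp [Fintype.linearCombination_apply, smul_sub, ← Finset.sum_smul, hp.2]
  · rintro ⟨p, hp, rfl, hpc⟩ α
    rw [← dotProduct_apply_eq_apply_linearCombination]
    exact (dotProduct_sub_logSumExp_le_negEntropy hp _).trans hpc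

theorem bddAbove_range_sub_logSumExp_iff (hB : B.SeparatingLeft) (e : ι → E) (s : E) :
    BddAbove (range fun α => B s α - logSumExp fun j => B (e j) α) ↔
      s ∈ convexHull ℝ (range e) := by
  simp only [bddAbove_def, forall_mem_range, forall_sub_logSumExp_le_iff hB,
    ← image_stdSimplex_linearCombination]
  exact ⟨fun ⟨_, p, hp, hps, _⟩ => ⟨p, hp, hps⟩, fun ⟨p, hp, hps⟩ => ⟨_, p, hp, hps, le_rfl⟩⟩

theorem strictConvexOn_iSup_sub_logSumExp (hB : B.SeparatingLeft) (e : ι → E) :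
    StrictConvexOn ℝ (convexHull ℝ (range e))
      fun s => ⨆ α, (B s α - logSumExp fun j => B (e j) α) := by
  rw [← image_stdSimplex_linearCombination]
  refine strictConvexOn_image_of_le_iff strictConvexOn_negEntropy_stdSimplex _ fun s hs c => ?_
  rw [image_stdSimplex_linearCombination] at hs
  rw [ciSup_le_iff ((bddAbove_range_sub_logSumExp_iff hB e s).2 hs),
    forall_sub_logSumExp_le_iff hB]

theorem surfTension_bddAbove_iff_and_strictConvexOn_general (hB : B.SeparatingLeft) (e : ι → E) :
    (∀ s, BddAbove (range fun α => B s α - logSumExp fun j => B (e j) α) ↔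
      s ∈ convexHull ℝ (range e)) ∧
    StrictConvexOn ℝ (convexHull ℝ (range e))
      fun s => ⨆ α, (B s α - logSumExp fun j => B (e j) α) :=
  ⟨bddAbove_range_sub_logSumExp_iff hB e, strictConvexOn_iSup_sub_logSumExp hB e⟩

end Gibbs

theorem separatingLeft_dotProductBilin {R n : Type*} [CommSemiring R] [Fintype n] :
    (dotProductBilin R R : (n → R) →ₗ[R] (n → R) →ₗ[R] R).SeparatingLeft :=
  fun x hx => dotProduct_eq_zero x hx

/-- The set `{⟨s, α⟩ − F(α) : α ∈ ℝ^d}` is bounded above iff `s` belongs to the Newton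
polytope `N = convexHull {e_1, …, e_D}`; moreover the surface tension `σ` is strictly
convex on the entire closed polytope `N`. -/
theorem surfTension_bddAbove_iff_and_strictConvexOn
    (d D : ℕ) (hd : 1 ≤ d) (hD : 1 ≤ D)
    (e : Fin D → (Fin d → ℝ))
    (hspan : Submodule.span ℝ (Set.range e) = ⊤)
    (hsum : ∑ j, e j = 0) :
    (∀ s : Fin d → ℝ,
      BddAbove (Set.range fun α : Fin d → ℝ => (∑ i, s i * α i) - freeEnergy d D e α) ↔
        s ∈ convexHull ℝ (Set.range e)) ∧
    StrictConvexOn ℝ (convexHull ℝ (Set.range e)) (surfTension d D e) :=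
  have : Nonempty (Fin D) := ⟨⟨0, hD⟩⟩
  surfTension_bddAbove_iff_and_strictConvexOn_general separatingLeft_dotProductBilin e
end

section
/- Generating function for multinomial dimer partition functions (coefficient form): for every N : V → ℕ and every k ∈ ℕ with Σ_{v ∈ V} N(v) = 2k, the coefficient of the monomial ∏_{v ∈ V} X_v^{N(v)} in the polynomial P^k equals k! · Σ_M ∏_{e ∈ E} w_e^{M(e)} / M(e)!, where the sum is over all M : E → ℕ satisfying Σ_{e incident to v} M(e) = N(v) for every v ∈ V. Equivalently, exp(P) = Σ_N Z_{G,N}(w) · X^N / N!, where Z_{G,N}(w) = Σ_M (∏_v N(v)! / ∏_e M(e)!) · ∏_e w_e^{M(e)} is the multinomial dimer partition function. -/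
/-!
Expand `P ^ k` by the multinomial theorem. A multiplicity function `M` with total `k` contributes
only to the monomial whose exponent at `v` is the number of edges at `v` counted with multiplicity
`M`, and its multinomial coefficient is `k! / ∏ e, M e !`. Conversely, every edge adds `2` to the
degree, so a function `M` realising an exponent of degree `2 * k` has total exactly `k`: the
constraint on the total in the multinomial theorem can be dropped.
-/

open Finset MvPolynomial
open scoped Nat

section MultinomialTheorem

variable {ι σ R K : Type*}

theorem coeff_sum_monomial_pow [DecidableEq ι] [DecidableEq σ] [CommSemiring R]
    (s : Finset ι) (d : ι → σ →₀ ℕ) (c : ι → R) (n : σ →₀ ℕ) (k : ℕ) :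
    coeff n ((∑ i ∈ s, monomial (d i) (c i)) ^ k) =
      ∑ M ∈ s.piAntidiag k with ∑ i ∈ s, M i • d i = n,
        (Nat.multinomial s M : R) * ∏ i ∈ s, c i ^ M i := by
  simp only [sum_pow_eq_sum_piAntidiag, monomial_pow, ← monomial_sum_prod, ← C_eq_coe_nat,
    coeff_sum, coeff_C_mul, coeff_monomial, mul_ite, mul_zero, sum_filter]

theorem cast_multinomial_mul_prod_pow [Semifield K] [CharZero K]
    (s : Finset ι) (M : ι → ℕ) (c : ι → K) :
    (Nat.multinomial s M : K) * ∏ i ∈ s, c i ^ M i =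
      ((∑ i ∈ s, M i)! : K) * ∏ i ∈ s, c i ^ M i / ((M i)! : K) := by
  have factorials_ne_zero : ∏ i ∈ s, ((M i)! : K) ≠ 0 :=
    prod_ne_zero_iff.2 fun i _ ↦ Nat.cast_ne_zero.2 (M i).factorial_ne_zero
  rw [← Nat.multinomial_spec, prod_div_distrib]
  push_cast
  field_simp

theorem degree_sum_smul_of_forall_degree_eq {s : Finset ι} {d : ι → σ →₀ ℕ} {m : ℕ}
    (hd : ∀ i ∈ s, (d i).degree = m) (M : ι → ℕ) :
    (∑ i ∈ s, M i • d i).degree = m * ∑ i ∈ s, M i := by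
  rw [map_sum, mul_sum]
  refine sum_congr rfl fun i hi ↦ ?_
  rw [map_nsmul, hd i hi, smul_eq_mul, mul_comm]

theorem coeff_sum_monomial_pow_of_forall_degree_eq [Fintype ι] [Semifield K] [CharZero K]
    {d : ι → σ →₀ ℕ} {m : ℕ} (hm : m ≠ 0) (hd : ∀ i, (d i).degree = m) (c : ι → K)
    {n : σ →₀ ℕ} {k : ℕ} (hn : n.degree = m * k) :
    coeff n ((∑ i, monomial (d i) (c i)) ^ k) =
      (k ! : K) * ∑ᶠ M ∈ {M : ι → ℕ | ∑ i, M i • d i = n}, ∏ i, c i ^ M i / ((M i)! : K) := by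
  classical
  have total_eq (M : ι → ℕ) (hM : ∑ i, M i • d i = n) : ∑ i, M i = k := by
    refine Nat.eq_of_mul_eq_mul_left (Nat.pos_of_ne_zero hm) ?_
    rw [← degree_sum_smul_of_forall_degree_eq (fun i _ ↦ hd i) M, hM, hn]
  have solutions_eq : {M : ι → ℕ | ∑ i, M i • d i = n} =
      ({M ∈ univ.piAntidiag k | ∑ i, M i • d i = n} : Finset (ι → ℕ)) := by
    ext M
    simpa using total_eq M
  rw [solutions_eq, finsum_mem_coe_finset, coeff_sum_monomial_pow, mul_sum]
  refine sum_congr rfl fun M hM ↦ ?_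
  rw [cast_multinomial_mul_prod_pow, total_eq M (mem_filter.1 hM).2]

end MultinomialTheorem

section Graph

variable {V E R K : Type*}

/-- The exponent of the monomial `X (a e) * X (b e)` which the edge `e` contributes to the tiling
polynomial. -/
noncomputable def edgeExponent (a b : E → V) (e : E) : V →₀ ℕ :=
  Finsupp.single (a e) 1 + Finsupp.single (b e) 1

theorem degree_edgeExponent (a b : E → V) (e : E) : (edgeExponent a b e).degree = 2 := by
  simp [edgeExponent]

theorem edgeExponent_apply [DecidableEq V] {a b : E → V} {e : E} (he : a e ≠ b e) (v : V) :
    edgeExponent a b e v = if a e = v ∨ b e = v then 1 else 0 := by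
  simp only [edgeExponent, Finsupp.add_apply, Finsupp.single_apply]
  grind

variable [Fintype E]

/-- The tiling polynomial `∑ e, w e * X (a e) * X (b e)` of the graph with vertex set `V`, edge set
`E` and endpoint maps `a` and `b`. -/
noncomputable def tilingPolynomial [CommSemiring R] (a b : E → V) (w : E → R) : MvPolynomial V R :=
  ∑ e, C (w e) * X (a e) * X (b e)

/-- The `N`-multinomial dimer covers of a graph, encoded by their edge multiplicities: the functions
`M : E → ℕ` for which every vertex `v` lies on `N v` edges, counted with multiplicity. -/
def multinomialDimerCovers [DecidableEq V] (a b : E → V) (N : V → ℕ) : Set (E → ℕ) :=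
  {M | ∀ v, ∑ e with a e = v ∨ b e = v, M e = N v}

instance finite_multinomialDimerCovers [DecidableEq V] (a b : E → V) (N : V → ℕ) :
    Finite (multinomialDimerCovers a b N) := by
  classical
  suffices multinomialDimerCovers a b N ⊆ Set.Iic (N ∘ a) from (Set.finite_Iic _).subset this
  intro M hM e
  rw [Function.comp_apply, ← hM (a e)]
  exact single_le_sum_of_canonicallyOrdered (by simp)

theorem tilingPolynomial_eq_sum_monomial [CommSemiring R] (a b : E → V) (w : E → R) :
    tilingPolynomial a b w = ∑ e, monomial (edgeExponent a b e) (w e) := by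
  simp [tilingPolynomial, edgeExponent, X, C_mul_monomial, monomial_mul]

theorem sum_smul_edgeExponent_eq_iff [DecidableEq V] {a b : E → V} (hab : ∀ e, a e ≠ b e)
    (M : E → ℕ) (N : V →₀ ℕ) :
    ∑ e, M e • edgeExponent a b e = N ↔ M ∈ multinomialDimerCovers a b N := by
  simp [Finsupp.ext_iff, multinomialDimerCovers, Finsupp.finsetSum_apply,
    edgeExponent_apply (hab _), sum_filter]

theorem coeff_tilingPolynomial_pow_general [DecidableEq V] [Semifield K] [CharZero K]
    (a b : E → V) (hab : ∀ e, a e ≠ b e) (w : E → K) (N : V →₀ ℕ) (k : ℕ)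
    (hN : N.degree = 2 * k) :
    coeff N (tilingPolynomial a b w ^ k) =
      (k ! : K) * ∑ᶠ M : multinomialDimerCovers a b N, ∏ e, w e ^ M.1 e / ((M.1 e)! : K) := by
  have solutions_eq : {M : E → ℕ | ∑ e, M e • edgeExponent a b e = N} =
      multinomialDimerCovers a b N :=
    Set.ext fun M ↦ sum_smul_edgeExponent_eq_iff hab M N
  rw [tilingPolynomial_eq_sum_monomial,
    coeff_sum_monomial_pow_of_forall_degree_eq two_ne_zero (degree_edgeExponent a b) w hN,
    solutions_eq, finsum_set_coe_eq_finsum_mem (multinomialDimerCovers a b N)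
      (f := fun M ↦ ∏ e, w e ^ M e / ((M e)! : K))]

end Graph

/-- Generating function for multinomial dimer partition functions (coefficient form):
for a finite graph with vertex set `V`, edge set `E` with endpoint maps `a b : E → V`
(`a e ≠ b e`), edge weights `w`, tiling polynomial `P = Σ_e w_e X_{a e} X_{b e}`,
vertex multiplicities `N : V → ℕ` and `k` with `Σ_v N v = 2k`, the coefficient of
`∏_v X_v^{N v}` in `P^k` equals `k! · Σ_M ∏_e w_e^{M e} / M e !`, the sum being over
all `M : E → ℕ` with `Σ_{e incident to v} M e = N v` for every `v`. -/
theorem coeff_tilingPolynomial_pow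
    {V E : Type*} [Fintype V] [Fintype E] [DecidableEq V]
    (a b : E → V) (hab : ∀ e, a e ≠ b e) (w : E → ℝ)
    (N : V → ℕ) (k : ℕ) (hN : ∑ v, N v = 2 * k) :
    MvPolynomial.coeff (Finsupp.equivFunOnFinite.symm N)
        ((∑ e, MvPolynomial.C (w e) * MvPolynomial.X (a e) * MvPolynomial.X (b e)) ^ k)
      = (Nat.factorial k : ℝ) *
          ∑' M : {M : E → ℕ //
              ∀ v, ∑ e ∈ Finset.univ.filter (fun e => a e = v ∨ b e = v), M e = N v},
            ∏ e, w e ^ M.1 e / (Nat.factorial (M.1 e) : ℝ) := by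
  have h := coeff_tilingPolynomial_pow_general a b hab w (Finsupp.equivFunOnFinite.symm N) k
    ((Finsupp.degree_eq_sum _).trans hN)
  rwa [← tsum_eq_finsum (L := .unconditional _) (Set.toFinite _)] at h
end

section
/- Hall's matching theorem for N-dimer covers: there exists a function M : W × B → ℕ with M(u,v) = 0 whenever u and v are not adjacent, Σ_{v ∈ B} M(u,v) = N(u) for every u ∈ W, and Σ_{u ∈ W} M(u,v) = N(v) for every v ∈ B, if and only if for every subset C ⊆ W one has Σ_{u ∈ C} N(u) ≤ Σ_{v ∈ Nbr(C)} N(v), where Nbr(C) = {v ∈ B : some u ∈ C is adjacent to v}. -/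
open Classical

/-!
Replace every white vertex `u` by `N u` copies and every black vertex `v` by `N v` copies, joining
copies of adjacent vertices. The weighted Hall condition is the usual Hall condition for this
blown-up graph: a set of copies only grows, while its neighborhood stays the same, when it is
completed to all copies of the vertices it meets. Counting how many copies of `u` are matched to
copies of `v` turns an injective matching into edge multiplicities that are exact at white
vertices and at most `N v` at black ones; equality of the total multiplicities leaves no slack.
-/

section OrderedMultiplicity

variable {W B R : Type*} [AddCommMonoid R] [PartialOrder R]

theorem sum_le_sum_biUnion_of_col_sum_le [IsOrderedAddMonoid R] [DecidableEq B]
    {t : W → Finset B} {n : W → R} {m : B → R} {M : W → B → R}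
    (hsupp : ∀ u, ∀ v ∉ t u, M u v = 0) (hrow : ∀ u, ∑ v ∈ t u, M u v = n u) {C : Finset W}
    (hcol : ∀ v, ∑ u ∈ C, M u v ≤ m v) :
    ∑ u ∈ C, n u ≤ ∑ v ∈ C.biUnion t, m v :=
  calc ∑ u ∈ C, n u
      = ∑ u ∈ C, ∑ v ∈ C.biUnion t, M u v := Finset.sum_congr rfl fun u hu => by
        rw [← hrow u]
        exact Finset.sum_subset (Finset.subset_biUnion_of_mem t hu) fun v _ hv => hsupp u v hv
    _ = ∑ v ∈ C.biUnion t, ∑ u ∈ C, M u v := Finset.sum_comm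
    _ ≤ ∑ v ∈ C.biUnion t, m v := Finset.sum_le_sum fun v _ => hcol v

theorem forall_col_sum_eq_iff_forall_sum_le [IsOrderedCancelAddMonoid R] [CanonicallyOrderedAdd R]
    [Fintype W] [Fintype B] {m : B → R} {M : W → B → R}
    (htotal : ∑ u, ∑ v, M u v = ∑ v, m v) :
    (∀ v, ∑ u, M u v = m v) ↔ ∀ v (C : Finset W), ∑ u ∈ C, M u v ≤ m v := by
  refine ⟨fun hcol v C => ?_, fun hcol v => ?_⟩
  · exact (Finset.sum_le_sum_of_subset C.subset_univ).trans_eq (hcol v)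
  · have hsum : ∑ v, ∑ u, M u v = ∑ v, m v := Finset.sum_comm.trans htotal
    exact (Finset.sum_eq_sum_iff_of_le fun v _ => hcol v Finset.univ).1 hsum v (Finset.mem_univ v)

theorem dimer_cover_iff_row_sum_and_col_sum_le [IsOrderedCancelAddMonoid R]
    [CanonicallyOrderedAdd R] [Fintype W] [Fintype B] {r : W → B → Prop}
    [∀ u, DecidablePred (r u)] {n : W → R} {m : B → R} {M : W → B → R}
    (hbal : ∑ u, n u = ∑ v, m v) :
    ((∀ u v, ¬ r u v → M u v = 0) ∧ (∀ u, ∑ v, M u v = n u) ∧ (∀ v, ∑ u, M u v = m v)) ↔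
      (∀ u, ∀ v ∉ Finset.univ.filter (r u), M u v = 0) ∧
      (∀ u, ∑ v ∈ Finset.univ.filter (r u), M u v = n u) ∧
      (∀ v (C : Finset W), ∑ u ∈ C, M u v ≤ m v) := by
  simp only [Finset.mem_filter, Finset.mem_univ, true_and]
  refine and_congr_right fun hsupp => ?_
  have hrow (u : W) : ∑ v ∈ Finset.univ.filter (r u), M u v = ∑ v, M u v :=
    Finset.sum_filter_of_ne fun v _ hv => not_imp_comm.1 (hsupp u v) hv
  simp only [hrow]
  refine and_congr_right fun hwhite => forall_col_sum_eq_iff_forall_sum_le ?_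
  simpa only [hwhite] using hbal

end OrderedMultiplicity

theorem filter_exists_rel_eq_biUnion {W B : Type*} [Fintype B] [DecidableEq B]
    (r : W → B → Prop) [∀ u, DecidablePred (r u)] (C : Finset W)
    [DecidablePred fun v => ∃ u ∈ C, r u v] :
    Finset.univ.filter (fun v => ∃ u ∈ C, r u v) = C.biUnion fun u => Finset.univ.filter (r u) := by
  ext v
  simp only [Finset.mem_filter, Finset.mem_univ, true_and, Finset.mem_biUnion]

theorem card_le_sum_card_image_fst {W : Type*} {α : W → Type*} [DecidableEq W]
    [∀ u, Fintype (α u)] (A : Finset (Σ u, α u)) :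
    A.card ≤ ∑ u ∈ A.image Sigma.fst, Fintype.card (α u) :=
  calc A.card
      ≤ ((A.image Sigma.fst).sigma fun _ => Finset.univ).card :=
        Finset.card_le_card fun _ ha =>
          Finset.mem_sigma.2 ⟨Finset.mem_image_of_mem _ ha, Finset.mem_univ _⟩
    _ = ∑ u ∈ A.image Sigma.fst, Fintype.card (α u) := Finset.card_sigma _ _

section BlowUp

variable {W B : Type*} [DecidableEq B] {α : W → Type*} {β : B → Type*} [∀ v, Fintype (β v)]

theorem card_biUnion_sigma_univ [DecidableEq W] [DecidableEq (Σ v, β v)]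
    (t : W → Finset B) (A : Finset (Σ u, α u)) :
    (A.biUnion fun a => (t a.1).sigma fun v => (Finset.univ : Finset (β v))).card =
      ∑ v ∈ (A.image Sigma.fst).biUnion t, Fintype.card (β v) := by
  have hsigma : (A.biUnion fun a => (t a.1).sigma fun v => (Finset.univ : Finset (β v))) =
      ((A.image Sigma.fst).biUnion t).sigma fun _ => Finset.univ := by
    ext b
    simp only [Finset.mem_biUnion, Finset.mem_sigma, Finset.mem_image, Finset.mem_univ, and_true,
      exists_exists_and_eq_and]
  simp only [hsigma, Finset.card_sigma, Finset.card_univ]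

variable [∀ u, Fintype (α u)]

theorem exists_injective_sigma_of_sum_card_le {t : W → Finset B}
    (hall : ∀ C : Finset W,
      ∑ u ∈ C, Fintype.card (α u) ≤ ∑ v ∈ C.biUnion t, Fintype.card (β v)) :
    ∃ f : (Σ u, α u) → Σ v, β v, Function.Injective f ∧ ∀ a, (f a).1 ∈ t a.1 := by
  have hcard (A : Finset (Σ u, α u)) :
      A.card ≤ (A.biUnion fun a => (t a.1).sigma fun v => (Finset.univ : Finset (β v))).card :=
    calc A.card
        ≤ ∑ u ∈ A.image Sigma.fst, Fintype.card (α u) := card_le_sum_card_image_fst A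
      _ ≤ ∑ v ∈ (A.image Sigma.fst).biUnion t, Fintype.card (β v) := hall _
      _ = _ := (card_biUnion_sigma_univ t A).symm
  obtain ⟨f, hf, hft⟩ := (Finset.all_card_le_biUnion_card_iff_exists_injective _).1 hcard
  exact ⟨f, hf, fun a => (Finset.mem_sigma.1 (hft a)).1⟩

/-- The edge multiplicity induced by an assignment `g` of black vertices to copies of white
vertices: the number of copies of `u` assigned to `v`. The type `α u` indexes the copies of `u`. -/
def copyCount (g : (Σ u, α u) → B) (u : W) (v : B) : ℕ :=
  (Finset.univ.filter fun i : α u => g ⟨u, i⟩ = v).card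

theorem copyCount_eq_zero {g : (Σ u, α u) → B} {u : W} {v : B} (hv : ∀ i, g ⟨u, i⟩ ≠ v) :
    copyCount g u v = 0 :=
  Finset.card_eq_zero.2 (Finset.filter_eq_empty_iff.2 fun i _ => hv i)

theorem sum_copyCount_eq_card {g : (Σ u, α u) → B} {u : W} {s : Finset B}
    (hg : ∀ i, g ⟨u, i⟩ ∈ s) : ∑ v ∈ s, copyCount g u v = Fintype.card (α u) :=
  (Finset.card_eq_sum_card_fiberwise fun i _ => hg i).symm

theorem sum_copyCount_le_card {f : (Σ u, α u) → Σ v, β v} (hf : Function.Injective f) (v : B)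
    (C : Finset W) : ∑ u ∈ C, copyCount (fun a => (f a).1) u v ≤ Fintype.card (β v) :=
  calc ∑ u ∈ C, copyCount (fun a => (f a).1) u v
      = (C.sigma fun u => Finset.univ.filter fun i : α u => (f ⟨u, i⟩).1 = v).card :=
        (Finset.card_sigma _ _).symm
    _ ≤ (({v} : Finset B).sigma fun v => (Finset.univ : Finset (β v))).card :=
        Finset.card_le_card_of_injOn f
          (fun a ha => by simpa using (Finset.mem_filter.1 (Finset.mem_sigma.1 ha).2).2)
          hf.injOn
    _ = Fintype.card (β v) := by rw [Finset.card_sigma, Finset.sum_singleton, Finset.card_univ]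

end BlowUp

-- Since `W` may be infinite, the capacity at `v` is imposed on all finite partial sums.
theorem hall_matching_dimer_covers_general {W B : Type*} [DecidableEq B]
    (t : W → Finset B) (n : W → ℕ) (m : B → ℕ) :
    (∃ M : W → B → ℕ,
        (∀ u, ∀ v ∉ t u, M u v = 0) ∧
        (∀ u, ∑ v ∈ t u, M u v = n u) ∧
        (∀ v (C : Finset W), ∑ u ∈ C, M u v ≤ m v)) ↔
      ∀ C : Finset W, ∑ u ∈ C, n u ≤ ∑ v ∈ C.biUnion t, m v := by
  constructor
  · rintro ⟨M, hsupp, hrow, hcol⟩ C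
    exact sum_le_sum_biUnion_of_col_sum_le hsupp hrow fun v => hcol v C
  · intro hall
    obtain ⟨f, hf, hft⟩ := exists_injective_sigma_of_sum_card_le
      (α := fun u => Fin (n u)) (β := fun v => Fin (m v)) (t := t)
      (by simpa only [Fintype.card_fin] using hall)
    refine ⟨copyCount fun a => (f a).1, fun u v hv => ?_, fun u => ?_, fun v C => ?_⟩
    · exact copyCount_eq_zero fun i hi => hv (hi ▸ hft ⟨u, i⟩)
    · rw [sum_copyCount_eq_card (α := fun u => Fin (n u)) fun i => hft ⟨u, i⟩, Fintype.card_fin]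
    · exact (sum_copyCount_le_card hf v C).trans_eq (Fintype.card_fin _)

/-- Hall's matching theorem for `N`-dimer covers of a finite bipartite graph with white
vertices `W`, black vertices `B`, adjacency `r`, and vertex multiplicities `N` with equal
total white and black multiplicity: an `N`-dimer cover (a multiplicity function on edges
summing to `N` at each vertex) exists iff for every `C ⊆ W` the total multiplicity of `C`
is at most the total multiplicity of its neighborhood. -/
theorem hall_matching_dimer_covers
    {W B : Type*} [Fintype W] [Fintype B]
    (r : W → B → Prop) (N : W ⊕ B → ℕ)
    (hbal : ∑ u : W, N (Sum.inl u) = ∑ v : B, N (Sum.inr v)) :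
    (∃ M : W → B → ℕ,
        (∀ u v, ¬ r u v → M u v = 0) ∧
        (∀ u, ∑ v, M u v = N (Sum.inl u)) ∧
        (∀ v, ∑ u, M u v = N (Sum.inr v))) ↔
      ∀ C : Finset W,
        ∑ u ∈ C, N (Sum.inl u) ≤
          ∑ v ∈ Finset.univ.filter (fun v => ∃ u ∈ C, r u v), N (Sum.inr v) := by
  simp_rw [filter_exists_rel_eq_biUnion, ← hall_matching_dimer_covers_general,
    dimer_cover_iff_row_sum_and_col_sum_le hbal]
end

section
/- A positive edge weight function w on a finite bipartite graph G is gauge equivalent to the uniform weight function (i.e. there exists x : V → ℝ_{>0} with w(e)·x(u)·x(v) = 1 for every edge e = (u,v)) if and only if for every cycle of G with edges e_1, e_2, …, e_{2k} in cyclic order, the alternating products agree: w(e_1)·w(e_3)⋯w(e_{2k−1}) = w(e_2)·w(e_4)⋯w(e_{2k}). -/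
/-- Alternating products of a weight function along a list of edges: the first component
is the product of the weights at odd positions (1st, 3rd, …) and the second component is
the product of the weights at even positions (2nd, 4th, …). -/
def altProd {V : Type*} (w : Sym2 V → ℝ) : List (Sym2 V) → ℝ × ℝ
  | [] => (1, 1)
  | e :: l => (w e * (altProd w l).2, (altProd w l).1)

/-!
Colour the two sides of the graph by signs `s v = ±1` and let a walk crossing the edge `uv` from `u`
pick up the factor `w(uv) ^ s u`. Reversing the crossing inverts this factor, and around a cycle the
factors multiply up to an alternating product or its inverse. A gauge `x` is the same thing as a
potential `v ↦ x v ^ s v` for these factors. A potential exists as soon as the factors multiply to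
`1` around every cycle: shortcutting a walk to a path removes only cycles and backtracked edges, so
the product along a walk depends on its endpoints alone, and walks from a root in each component
define the potential.
-/

open SimpleGraph

/-- A gain function (voltage assignment) on a graph: each oriented edge carries a group element,
and reversing the edge inverts it. -/
structure GainFunction {V : Type*} (G : SimpleGraph V) (Γ : Type*) [Group Γ] where
  gain : G.Dart → Γ
  gain_symm : ∀ d, gain d.symm = (gain d)⁻¹

namespace GainFunction

variable {V Γ : Type*} {G : SimpleGraph V} [Group Γ] (φ : GainFunction G Γ) {u v w : V}

/-- The gain of a walk: the product of the gains of its darts, in order of traversal. -/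
def walkGain (p : G.Walk u v) : Γ := (p.darts.map φ.gain).prod

/-- A potential of a gain function: a vertex labelling whose change along each oriented edge is
right multiplication by the gain of that edge. -/
def IsPotential (f : V → Γ) : Prop := ∀ d : G.Dart, f d.fst * φ.gain d = f d.snd

/-- A gain function is balanced if every cycle has trivial gain. -/
def IsBalanced : Prop := ∀ (v : V) (c : G.Walk v v), c.IsCycle → φ.walkGain c = 1

@[simp]
theorem walkGain_nil : φ.walkGain (Walk.nil : G.Walk v v) = 1 := rfl

@[simp]
theorem walkGain_cons (h : G.Adj u v) (p : G.Walk v w) :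
    φ.walkGain (.cons h p) = φ.gain ⟨(u, v), h⟩ * φ.walkGain p := by
  simp [walkGain]

theorem walkGain_append (p : G.Walk u v) (q : G.Walk v w) :
    φ.walkGain (p.append q) = φ.walkGain p * φ.walkGain q := by
  simp [walkGain]

theorem walkGain_copy {u' v' : V} (p : G.Walk u v) (hu : u = u') (hv : v = v') :
    φ.walkGain (p.copy hu hv) = φ.walkGain p := by
  simp [walkGain]

theorem walkGain_cons_toWalk_symm (h : G.Adj u v) :
    φ.walkGain (.cons h h.symm.toWalk) = 1 := by
  have hsymm : φ.gain ⟨(v, u), h.symm⟩ = (φ.gain ⟨(u, v), h⟩)⁻¹ := φ.gain_symm ⟨(u, v), h⟩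
  simp [hsymm]

variable {φ}

theorem IsPotential.mul_walkGain {f : V → Γ} (hf : φ.IsPotential f) (p : G.Walk u v) :
    f u * φ.walkGain p = f v := by
  induction p with
  | nil => simp
  | @cons u v _ h p ih =>
    have hstep : f u * φ.gain ⟨(u, v), h⟩ = f v := hf ⟨(u, v), h⟩
    rw [walkGain_cons, ← mul_assoc, hstep, ih]

theorem IsPotential.isBalanced {f : V → Γ} (hf : φ.IsPotential f) : φ.IsBalanced :=
  fun _ c _ => mul_eq_left.1 (hf.mul_walkGain c)

theorem IsBalanced.walkGain_cons_of_isPath (hφ : φ.IsBalanced) (h : G.Adj u v)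
    {p : G.Walk v u} (hp : p.IsPath) : φ.walkGain (.cons h p) = 1 := by
  by_cases hmem : s(u, v) ∈ p.edges
  · rw [hp.eq_adj_toWalk_of_mem_edges (Sym2.eq_swap ▸ hmem)]
    exact φ.walkGain_cons_toWalk_symm h
  · exact hφ u _ ((Walk.cons_isCycle_iff p h).2 ⟨hp, hmem⟩)

theorem IsBalanced.walkGain_bypass [DecidableEq V] (hφ : φ.IsBalanced) (p : G.Walk u v) :
    φ.walkGain p.bypass = φ.walkGain p := by
  induction p with
  | nil => rfl
  | @cons u v w h p ih =>
    rw [walkGain_cons, ← ih, Walk.bypass]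
    split_ifs with hu
    · have hpath := p.bypass_isPath.takeUntil hu
      calc φ.walkGain (p.bypass.dropUntil u hu)
        _ = φ.walkGain (.cons h (p.bypass.takeUntil u hu)) *
              φ.walkGain (p.bypass.dropUntil u hu) := by
          rw [hφ.walkGain_cons_of_isPath h hpath, one_mul]
        _ = φ.gain ⟨(u, v), h⟩ * φ.walkGain p.bypass := by
          rw [walkGain_cons, mul_assoc, ← walkGain_append, Walk.take_spec]
    · rw [walkGain_cons]

theorem IsBalanced.walkGain_eq_one (hφ : φ.IsBalanced) (p : G.Walk v v) : φ.walkGain p = 1 := by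
  classical
  rw [← hφ.walkGain_bypass, (Walk.isPath_iff_nil.1 p.bypass_isPath).eq_nil, walkGain_nil]

theorem IsBalanced.walkGain_eq (hφ : φ.IsBalanced) (p q : G.Walk u v) :
    φ.walkGain p = φ.walkGain q := by
  have hp := hφ.walkGain_eq_one (p.append q.reverse)
  have hq := hφ.walkGain_eq_one (q.append q.reverse)
  rw [walkGain_append] at hp hq
  exact mul_right_cancel (hp.trans hq.symm)

theorem IsBalanced.exists_isPotential (hφ : φ.IsBalanced) : ∃ f, φ.IsPotential f := by
  let root (v : V) : V := (G.connectedComponentMk v).out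
  have reachable_root (v : V) : G.Reachable (root v) v := ConnectedComponent.exact (Quot.out_eq _)
  let toVertex (v : V) : G.Walk (root v) v := (reachable_root v).some
  refine ⟨fun v => φ.walkGain (toVertex v), fun ⟨(u, v), h⟩ => ?_⟩
  have root_eq : root u = root v :=
    congrArg Quot.out (ConnectedComponent.sound h.reachable)
  calc φ.walkGain (toVertex u) * φ.gain ⟨(u, v), h⟩
    _ = φ.walkGain (((toVertex u).copy root_eq rfl).append h.toWalk) := by
      simp [walkGain_append, walkGain_copy]
    _ = φ.walkGain (toVertex v) := hφ.walkGain_eq _ _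

theorem exists_isPotential_iff_isBalanced : (∃ f, φ.IsPotential f) ↔ φ.IsBalanced :=
  ⟨fun ⟨_, hf⟩ => hf.isBalanced, IsBalanced.exists_isPotential⟩

end GainFunction

theorem alternatingProd_cons_eq_div {M : Type*} [DivisionCommMonoid M] (a : M) :
    ∀ l : List M, (a :: l).alternatingProd = a / l.alternatingProd
  | [] => by simp
  | b :: l => by
    rw [List.alternatingProd_cons_cons, alternatingProd_cons_eq_div b l, div_div_eq_mul_div,
      div_mul_eq_mul_div]

theorem zpow_sign_eq_one_iff {Γ : Type*} [Group Γ] (a : Γ) (ε : ℤˣ) :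
    a ^ (ε : ℤ) = 1 ↔ a = 1 := by
  rcases Int.units_eq_one_or ε with rfl | rfl <;> simp

theorem involutive_zpow_sign {V Γ : Type*} [Group Γ] (s : V → ℤˣ) :
    Function.Involutive fun (x : V → Γ) v => x v ^ (s v : ℤ) := fun x => by
  funext v
  simp only [← zpow_mul, Int.units_coe_mul_self, zpow_one]

section Bipartite

variable {V Γ : Type*} {G : SimpleGraph V} (s : G.Coloring ℤˣ) {w : G.Dart → Γ}

theorem coloring_eq_neg_of_adj {u v : V} (h : G.Adj u v) : s v = -s u :=
  Int.units_ne_iff_eq_neg.1 (s.valid h).symm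

/-- The gain function of an edge weight on a graph whose vertices are properly coloured by signs:
crossing an edge contributes its weight, raised to the sign of the vertex one comes from. The weight
is encoded as a function of oriented edges that ignores the orientation. -/
def signedGain [Group Γ] (hw : ∀ d, w d.symm = w d) : GainFunction G Γ where
  gain d := w d ^ (s d.fst : ℤ)
  gain_symm d := by simp [hw, coloring_eq_neg_of_adj s d.adj]

variable [CommGroup Γ]

theorem walkGain_signedGain (hw : ∀ d, w d.symm = w d) {u v : V} (p : G.Walk u v) :
    (signedGain s hw).walkGain p = (p.darts.map w).alternatingProd ^ (s u : ℤ) := by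
  induction p with
  | nil => simp
  | cons h p ih =>
    rw [GainFunction.walkGain_cons, ih, coloring_eq_neg_of_adj s h]
    simp [signedGain, div_zpow, ← div_eq_mul_inv]

theorem isBalanced_signedGain_iff (hw : ∀ d, w d.symm = w d) :
    (signedGain s hw).IsBalanced ↔
      ∀ (v : V) (c : G.Walk v v), c.IsCycle → (c.darts.map w).alternatingProd = 1 := by
  simp only [GainFunction.IsBalanced, walkGain_signedGain, zpow_sign_eq_one_iff]

theorem isPotential_signedGain_iff (hw : ∀ d, w d.symm = w d) (x : V → Γ) :
    (signedGain s hw).IsPotential (fun v => x v ^ (s v : ℤ)) ↔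
      ∀ d : G.Dart, w d * x d.fst * x d.snd = 1 := by
  refine forall_congr' fun d => ?_
  simp only [signedGain, coloring_eq_neg_of_adj s d.adj, Units.val_neg, zpow_neg]
  rw [← mul_eq_one_iff_eq_inv, ← mul_zpow, ← mul_zpow, zpow_sign_eq_one_iff, mul_comm (x _)]

theorem exists_gauge_iff_alternatingProd_eq_one (hbip : G.Colorable 2)
    (hw : ∀ d, w d.symm = w d) :
    (∃ x : V → Γ, ∀ d : G.Dart, w d * x d.fst * x d.snd = 1) ↔
      ∀ (v : V) (c : G.Walk v v), c.IsCycle → (c.darts.map w).alternatingProd = 1 := by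
  let s : G.Coloring ℤˣ := hbip.toColoring Fintype.card_units_int.ge
  simp only [← isPotential_signedGain_iff s hw, ← isBalanced_signedGain_iff s hw,
    ← GainFunction.exists_isPotential_iff_isBalanced]
  exact (involutive_zpow_sign s).surjective.exists.symm

end Bipartite

section Positive

variable {K : Type*} [Field K] [LinearOrder K] [IsStrictOrderedRing K]

theorem coe_alternatingProd_of_pos (l : List {a : K // 0 < a}) :
    (l.alternatingProd : K) = (l.map (↑)).alternatingProd := by
  induction l with
  | nil => simp
  | cons a l ih =>
    rw [List.alternatingProd_cons', List.map_cons, alternatingProd_cons_eq_div, ← ih,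
      Positive.val_mul, Positive.coe_inv, div_eq_mul_inv]

theorem gauge_equivalent_uniform_iff_alternating_products_general
    {V : Type*} (G : SimpleGraph V) (hbip : G.Colorable 2)
    (w : Sym2 V → K) (hw : ∀ e ∈ G.edgeSet, 0 < w e) :
    (∃ x : V → K, (∀ v, 0 < x v) ∧ ∀ u v, G.Adj u v → w s(u, v) * x u * x v = 1) ↔
      ∀ (v : V) (c : G.Walk v v), c.IsCycle → (c.edges.map w).alternatingProd = 1 := by
  let w' (d : G.Dart) : {a : K // 0 < a} := ⟨w d.edge, hw _ d.edge_mem⟩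
  have hw' (d : G.Dart) : w' d.symm = w' d := by simp [w']
  have gauge_iff :
      (∃ x : V → K, (∀ v, 0 < x v) ∧ ∀ u v, G.Adj u v → w s(u, v) * x u * x v = 1) ↔
        ∃ x : V → {a : K // 0 < a}, ∀ d : G.Dart, w' d * x d.fst * x d.snd = 1 :=
    ⟨fun ⟨x, hx, h⟩ => ⟨fun v => ⟨x v, hx v⟩, fun d => Subtype.ext (h _ _ d.adj)⟩,
      fun ⟨x, h⟩ => ⟨fun v => x v, fun v => (x v).2,
        fun u v huv => congrArg Subtype.val (h ⟨(u, v), huv⟩)⟩⟩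
  have cycle_iff {v : V} (c : G.Walk v v) :
      (c.darts.map w').alternatingProd = 1 ↔ (c.edges.map w).alternatingProd = 1 := by
    rw [← Subtype.coe_inj, coe_alternatingProd_of_pos, List.map_map, Walk.edges, List.map_map]
    rfl
  rw [gauge_iff, exists_gauge_iff_alternatingProd_eq_one hbip hw']
  exact forall₃_congr fun _ c _ => cycle_iff c

end Positive

section AltProd

variable {V : Type*} (w : Sym2 V → ℝ)

theorem altProd_fst_div_snd (l : List (Sym2 V)) :
    (altProd w l).1 / (altProd w l).2 = (l.map w).alternatingProd := by
  induction l with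
  | nil => simp [altProd]
  | cons e l ih =>
    rw [List.map_cons, alternatingProd_cons_eq_div, ← ih, altProd, div_div_eq_mul_div]

variable {w}

theorem altProd_pos {l : List (Sym2 V)} (hl : ∀ e ∈ l, 0 < w e) :
    0 < (altProd w l).1 ∧ 0 < (altProd w l).2 := by
  induction l with
  | nil => simp [altProd]
  | cons e l ih =>
    obtain ⟨he, hl⟩ := List.forall_mem_cons.1 hl
    exact ⟨mul_pos he (ih hl).2, (ih hl).1⟩

theorem alternatingProd_eq_one_iff_altProd {l : List (Sym2 V)} (hl : ∀ e ∈ l, 0 < w e) :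
    (l.map w).alternatingProd = 1 ↔ (altProd w l).1 = (altProd w l).2 := by
  rw [← altProd_fst_div_snd, div_eq_one_iff_eq (altProd_pos hl).2.ne']

end AltProd

/-- A positive edge weight function `w` on a finite bipartite simple graph is gauge
equivalent to the uniform weight function (there is `x : V → ℝ_{>0}` with
`w(e)·x(u)·x(v) = 1` for every edge `e = (u,v)`) iff for every cycle with edges
`e_1, …, e_{2k}` in cyclic order the alternating products agree:
`w(e_1)·w(e_3)⋯w(e_{2k−1}) = w(e_2)·w(e_4)⋯w(e_{2k})`. -/
theorem gauge_equivalent_uniform_iff_alternating_products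
    {V : Type*} [Fintype V] [DecidableEq V]
    (G : SimpleGraph V) (hbip : G.Colorable 2)
    (w : Sym2 V → ℝ) (hw : ∀ e ∈ G.edgeSet, 0 < w e) :
    (∃ x : V → ℝ, (∀ v, 0 < x v) ∧
        ∀ u v, G.Adj u v → w s(u, v) * x u * x v = 1) ↔
      ∀ (v : V) (c : G.Walk v v), c.IsCycle →
        (altProd w c.edges).1 = (altProd w c.edges).2 :=
  (gauge_equivalent_uniform_iff_alternating_products_general G hbip w hw).trans <|
    forall₃_congr fun _ c _ =>
      alternatingProd_eq_one_iff_altProd fun e he => hw e (c.edges_subset_edgeSet he)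
end

section
/- Maximum principle for the critical gauge equations: (i) there exists a point u_0 ∈ U \ U° at which q/q_− attains its minimum over U, i.e. q(u_0)/q_−(u_0) ≤ q(u)/q_−(u) for all u ∈ U; (ii) likewise, if q_+ : ℤ^d → ℝ is positive on U and satisfies the supersolution inequality 1/q_+(u) < Σ_{i=1}^D ( Σ_{j=1}^D q_+(u + v(i,j)) )^{−1} at every u ∈ U°, then q/q_+ attains its maximum over U at some point of U \ U°. -/
/-- `u` is an interior point of the finite set `U ⊆ ℤ^d` for the shift vectors `v i j`:
`u ∈ U` and all shifts `u + v i j` remain in `U`. -/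
def IsInteriorPt {d D : ℕ} (v : Fin D → Fin D → (Fin d → ℤ)) (U : Finset (Fin d → ℤ))
    (u : Fin d → ℤ) : Prop :=
  u ∈ U ∧ ∀ i j, u + v i j ∈ U

/-!
Multiplying the gauge equation at `u` by `q u` turns it into `N q u = 1`, where the functional
`N f u = f u * ∑ i, (∑ j, f (u + v i j))⁻¹` is invariant under scaling of `f` and decreases when
`f` increases at the neighbours `u + v i j`. If `f / g` attains its minimum `c` at an interior
point `u`, then `f ≥ c * g` with equality at `u`, whence `N f u ≤ N (c * g) u = N g u`. So the
minimum of `f / g` is never attained at an interior point where `N g < N f`. Both parts of the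
maximum principle are instances, since maximizing `q / qp` means minimizing `qp / q`.
-/

section GaugeRatio

variable {X ι κ K : Type*} {nbr : X → ι → κ → X} {f g : X → K} {u : X}

/-- The interior `U°` of `U`, with the translations `u + v i j` of the lattice replaced by an
arbitrary family of neighbours `nbr u i j`. -/
def nbrInterior (nbr : X → ι → κ → X) (U : Set X) : Set X :=
  {u ∈ U | ∀ i j, nbr u i j ∈ U}

variable [Fintype ι] [Fintype κ] [Semifield K]

/-- The scale-invariant form of the gauge equation: for positive `f`, solutions, strict subsolutions
and strict supersolutions are given by `gaugeRatio nbr f u` being `= 1`, `< 1` and `> 1`. -/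
def gaugeRatio (nbr : X → ι → κ → X) (f : X → K) (u : X) : K :=
  f u * ∑ i, (∑ j, f (nbr u i j))⁻¹

theorem gaugeRatio_smul {c : K} (hc : c ≠ 0) : gaugeRatio nbr (c • f) u = gaugeRatio nbr f u := by
  simp only [gaugeRatio, Pi.smul_apply, smul_eq_mul, ← Finset.mul_sum, mul_inv]
  rw [mul_mul_mul_comm, mul_inv_cancel₀ hc, one_mul]

theorem gaugeRatio_eq_one_iff (hf : f u ≠ 0) :
    gaugeRatio nbr f u = 1 ↔ (f u)⁻¹ = ∑ i, (∑ j, f (nbr u i j))⁻¹ := by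
  rw [gaugeRatio, mul_eq_one_iff_inv_eq₀ hf]

variable [LinearOrder K] [IsStrictOrderedRing K]

theorem gaugeRatio_lt_one_iff (hf : 0 < f u) :
    gaugeRatio nbr f u < 1 ↔ ∑ i, (∑ j, f (nbr u i j))⁻¹ < (f u)⁻¹ := by
  rw [gaugeRatio, ← lt_inv_mul_iff₀ hf, mul_one]

theorem one_lt_gaugeRatio_iff (hf : 0 < f u) :
    1 < gaugeRatio nbr f u ↔ (f u)⁻¹ < ∑ i, (∑ j, f (nbr u i j))⁻¹ :=
  (inv_lt_iff_one_lt_mul₀' hf).symm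

theorem gaugeRatio_le_gaugeRatio_of_le_of_eq [Nonempty κ] (hfu : 0 ≤ f u)
    (hg : ∀ i j, 0 < g (nbr u i j)) (hle : ∀ i j, g (nbr u i j) ≤ f (nbr u i j)) (heq : f u = g u) :
    gaugeRatio nbr f u ≤ gaugeRatio nbr g u := by
  have hsum_pos : ∀ i, 0 < ∑ j, g (nbr u i j) := fun i ↦
    Finset.sum_pos (fun j _ ↦ hg i j) Finset.univ_nonempty
  have hsum_le : ∀ i, ∑ j, g (nbr u i j) ≤ ∑ j, f (nbr u i j) := fun i ↦
    Finset.sum_le_sum fun j _ ↦ hle i j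
  rw [gaugeRatio, gaugeRatio, ← heq]
  exact mul_le_mul_of_nonneg_left
    (Finset.sum_le_sum fun i _ ↦ inv_anti₀ (hsum_pos i) (hsum_le i)) hfu

theorem gaugeRatio_le_gaugeRatio_of_isMinOn_div [Nonempty κ] {U : Set X}
    (hfu : 0 < f u) (hg : ∀ w ∈ U, 0 < g w) (hu : u ∈ nbrInterior nbr U)
    (hmin : IsMinOn (f / g) U u) : gaugeRatio nbr f u ≤ gaugeRatio nbr g u := by
  obtain ⟨huU, hnbr⟩ := hu
  let c := f u / g u
  have hc_pos : 0 < c := div_pos hfu (hg u huU)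
  have hle : ∀ w ∈ U, (c • g) w ≤ f w := fun w hw ↦ (le_div_iff₀ (hg w hw)).1 (hmin hw)
  have heq : f u = (c • g) u := (div_mul_cancel₀ (f u) (hg u huU).ne').symm
  calc gaugeRatio nbr f u
      ≤ gaugeRatio nbr (c • g) u :=
        gaugeRatio_le_gaugeRatio_of_le_of_eq hfu.le
          (fun i j ↦ mul_pos hc_pos (hg _ (hnbr i j))) (fun i j ↦ hle _ (hnbr i j)) heq
    _ = gaugeRatio nbr g u := gaugeRatio_smul hc_pos.ne'

theorem exists_notMem_nbrInterior_isMinOn_div [Nonempty κ] {U : Finset X} (hU : U.Nonempty)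
    (hf : ∀ w ∈ U, 0 < f w) (hg : ∀ w ∈ U, 0 < g w)
    (hlt : ∀ w ∈ nbrInterior nbr (U : Set X), gaugeRatio nbr g w < gaugeRatio nbr f w) :
    ∃ u ∈ U, u ∉ nbrInterior nbr (U : Set X) ∧ IsMinOn (f / g) U u := by
  obtain ⟨u, hu, hmin⟩ := U.exists_min_image (f / g) hU
  exact ⟨u, hu, fun hint ↦
    (hlt u hint).not_ge (gaugeRatio_le_gaugeRatio_of_isMinOn_div (hf u hu) hg hint hmin), hmin⟩

theorem maximum_principle_critical_gauge_general [Nonempty κ] {U : Finset X} (hU : U.Nonempty)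
    {q : X → K} (hq_pos : ∀ u ∈ U, 0 < q u)
    (hq : ∀ u ∈ nbrInterior nbr (U : Set X), (q u)⁻¹ = ∑ i, (∑ j, q (nbr u i j))⁻¹) :
    (∀ qm : X → K, (∀ u ∈ U, 0 < qm u) →
      (∀ u ∈ nbrInterior nbr (U : Set X), ∑ i, (∑ j, qm (nbr u i j))⁻¹ < (qm u)⁻¹) →
      ∃ u₀ ∈ U, u₀ ∉ nbrInterior nbr (U : Set X) ∧ ∀ u ∈ U, q u₀ / qm u₀ ≤ q u / qm u) ∧
    (∀ qp : X → K, (∀ u ∈ U, 0 < qp u) →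
      (∀ u ∈ nbrInterior nbr (U : Set X), (qp u)⁻¹ < ∑ i, (∑ j, qp (nbr u i j))⁻¹) →
      ∃ u₁ ∈ U, u₁ ∉ nbrInterior nbr (U : Set X) ∧ ∀ u ∈ U, q u / qp u ≤ q u₁ / qp u₁) := by
  have hq_one : ∀ u ∈ nbrInterior nbr (U : Set X), gaugeRatio nbr q u = 1 := fun u hu ↦
    (gaugeRatio_eq_one_iff (hq_pos u hu.1).ne').2 (hq u hu)
  refine ⟨fun qm hqm_pos hqm ↦ ?_, fun qp hqp_pos hqp ↦ ?_⟩
  · refine exists_notMem_nbrInterior_isMinOn_div hU hq_pos hqm_pos fun u hu ↦ ?_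
    rw [hq_one u hu]
    exact (gaugeRatio_lt_one_iff (hqm_pos u hu.1)).2 (hqm u hu)
  · have hlt : ∀ u ∈ nbrInterior nbr (U : Set X), gaugeRatio nbr q u < gaugeRatio nbr qp u := by
      intro u hu
      rw [hq_one u hu]
      exact (one_lt_gaugeRatio_iff (hqp_pos u hu.1)).2 (hqp u hu)
    obtain ⟨u₁, hu₁, hint, hmin⟩ := exists_notMem_nbrInterior_isMinOn_div hU hqp_pos hq_pos hlt
    refine ⟨u₁, hu₁, hint, fun u hu ↦ ?_⟩
    rw [← inv_div (qp u), ← inv_div (qp u₁)]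
    exact inv_anti₀ (div_pos (hqp_pos u₁ hu₁) (hq_pos u₁ hu₁)) (hmin hu)

end GaugeRatio

/-- Maximum principle for the critical gauge equations: if on a finite nonempty
`U ⊆ ℤ^d` the positive function `q` solves the critical gauge equation
`1/q(u) = Σ_i (Σ_j q(u + v(i,j)))⁻¹` at every interior point, then
(i) for every positive subsolution `q₋` (with `1/q₋(u) > Σ_i (Σ_j q₋(u+v(i,j)))⁻¹` at
interior points) the ratio `q/q₋` attains its minimum over `U` at a point of `U \ U°`;
(ii) for every positive supersolution `q₊` the ratio `q/q₊` attains its maximum over `U`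
at a point of `U \ U°`. -/
theorem maximum_principle_critical_gauge
    (d D : ℕ) (hd : 1 ≤ d) (hD : 1 ≤ D)
    (v : Fin D → Fin D → (Fin d → ℤ))
    (U : Finset (Fin d → ℤ)) (hU : U.Nonempty)
    (q qm : (Fin d → ℤ) → ℝ)
    (hqpos : ∀ u ∈ U, 0 < q u) (hqmpos : ∀ u ∈ U, 0 < qm u)
    (hq : ∀ u, IsInteriorPt v U u → (q u)⁻¹ = ∑ i, (∑ j, q (u + v i j))⁻¹)
    (hqm : ∀ u, IsInteriorPt v U u → ∑ i, (∑ j, qm (u + v i j))⁻¹ < (qm u)⁻¹) :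
    (∃ u₀ ∈ U, ¬ IsInteriorPt v U u₀ ∧ ∀ u ∈ U, q u₀ / qm u₀ ≤ q u / qm u) ∧
    (∀ qp : (Fin d → ℤ) → ℝ, (∀ u ∈ U, 0 < qp u) →
      (∀ u, IsInteriorPt v U u → (qp u)⁻¹ < ∑ i, (∑ j, qp (u + v i j))⁻¹) →
      ∃ u₁ ∈ U, ¬ IsInteriorPt v U u₁ ∧ ∀ u ∈ U, q u / qp u ≤ q u₁ / qp u₁) := by
  have : Nonempty (Fin D) := ⟨⟨0, hD⟩⟩
  have h := maximum_principle_critical_gauge_general (nbr := fun u i j ↦ u + v i j) hU hqpos hq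
  exact ⟨h.1 qm hqmpos hqm, h.2⟩
end

section
/- Expansion of the critical gauge equations: as n → ∞, C_n(u) := Σ_{i=1}^D [ Σ_{j=1}^D exp( n·( q(u + (e_j − e_i)/n) − q(u) ) ) ]^{−1} satisfies C_n(u) = 1 − 𝒟q(u)/n + O(1/n²), where 𝒟q(u) := (1/2) · Σ_{i,j=1}^D [ exp(⟨e_i + e_j, ∇q(u)⟩) / ( Σ_{k=1}^D exp(⟨e_k, ∇q(u)⟩) )² ] · ⟨ e_j − e_i, (Hess q)(u) (e_j − e_i) ⟩; that is, there exist C ≥ 0 and n_0 such that |C_n(u) − 1 + 𝒟q(u)/n| ≤ C/n² for all n ≥ n_0. -/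
/-!
Along the segment from `u` to `u + v / r`, Taylor's formula gives
`r (q (u + v / r) - q u) = Dq(u) v + D²q(u)(v, v) / (2 r) + O(1 / r²)` as `r → ∞`. Expansions of
the form `a + b / r + O(1 / r²)` are preserved by finite sums, exponentials and inverses, so
`C_n(u)` with `n` replaced by `r` has one as well. With `x k = Dq(u) (e k)`, the sum
`∑ j, exp (x j - x i)` is `exp (-x i)` times the partition function `Z = ∑ k, exp (x k)`. Hence the
constant term is the total mass of the softmax weights `exp (x i) / Z`, which is `1`, and the
coefficient of `1 / r` is `-𝒟q(u)`.
-/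

open Filter Topology Asymptotics

section Taylor

variable {E F : Type*} [NormedAddCommGroup E] [NormedSpace ℝ E]
  [NormedAddCommGroup F] [NormedSpace ℝ F] {f : E → F} {f' : E → E →L[ℝ] F} {a : E}

theorem isBigO_pow_succ_of_hasFDerivAt {k : ℕ} (hf : ∀ᶠ x in 𝓝 a, HasFDerivAt f (f' x) x)
    (hf' : f' =O[𝓝 a] fun x ↦ ‖x - a‖ ^ k) :
    (fun x ↦ f x - f a) =O[𝓝 a] fun x ↦ ‖x - a‖ ^ (k + 1) := by
  obtain ⟨C, hC, hbound⟩ := hf'.exists_nonneg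
  obtain ⟨r, hr, hball⟩ := Metric.eventually_nhds_iff_ball.1 (hf.and hbound.bound)
  refine IsBigO.of_bound C ?_
  filter_upwards [Metric.ball_mem_nhds a hr] with x hx
  have hseg : segment ℝ a x ⊆ Metric.ball a r :=
    (convex_ball a r).segment_subset (Metric.mem_ball_self hr) hx
  have hderiv : ∀ y ∈ segment ℝ a x, ‖f' y‖ ≤ C * ‖x - a‖ ^ k := fun y hy ↦ by
    refine (hball y (hseg hy)).2.trans ?_
    rw [norm_pow, norm_norm]
    gcongr
    exact norm_sub_le_of_mem_segment hy
  have hmean := (convex_segment a x).norm_image_sub_le_of_norm_hasFDerivWithin_le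
    (fun y hy ↦ (hball y (hseg hy)).1.hasFDerivWithinAt) hderiv
    (left_mem_segment ℝ a x) (right_mem_segment ℝ a x)
  simpa [pow_succ, mul_assoc] using hmean

theorem isBigO_taylor_one (hf : ∀ᶠ x in 𝓝 a, HasFDerivAt f (f' x) x)
    (hf' : (fun x ↦ f' x - f' a) =O[𝓝 a] fun x ↦ x - a) :
    (fun x ↦ f x - f a - f' a (x - a)) =O[𝓝 a] fun x ↦ ‖x - a‖ ^ 2 := by
  have hrem : ∀ᶠ x in 𝓝 a, HasFDerivAt (fun x ↦ f x - f' a (x - a)) (f' x - f' a) x :=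
    hf.mono fun x hx ↦ hx.sub ((f' a).hasFDerivAt.comp x ((hasFDerivAt_id x).sub_const a))
  have := isBigO_pow_succ_of_hasFDerivAt (k := 1) hrem (by simpa using hf'.norm_right)
  exact this.congr_left fun x ↦ by simp [sub_right_comm]

theorem isBigO_taylor_two {k : ℕ} (hk : 1 < k) {f'' : E →L[ℝ] E →L[ℝ] F}
    (hf : ∀ᶠ x in 𝓝 a, HasFDerivAt f (f' x) x)
    (hf' : (fun x ↦ f' x - f' a - f'' (x - a)) =O[𝓝 a] fun x ↦ ‖x - a‖ ^ k) :
    (fun x ↦ f x - f a - f' a (x - a) - (1 / 2 : ℝ) • f'' (x - a) (x - a)) =O[𝓝 a]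
      fun x ↦ ‖x - a‖ ^ (k + 1) := by
  have hsymm : ∀ v w, f'' v w = f'' w v :=
    second_derivative_symmetric_of_eventually hf
      (.of_isLittleO (hf'.trans_isLittleO (isLittleO_pow_sub_sub a hk)))
  have hquad : ∀ x, HasFDerivAt (fun x ↦ (1 / 2 : ℝ) • f'' (x - a) (x - a)) (f'' (x - a)) x := by
    intro x
    have hsub : HasFDerivAt (fun x ↦ x - a) (.id ℝ E) x := (hasFDerivAt_id x).sub_const a
    refine (((f''.hasFDerivAt.comp x hsub).clm_apply hsub).const_smul (1 / 2 : ℝ)).congr_fderiv ?_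
    ext v
    simp [hsymm v, ← two_smul ℝ, smul_smul]
  have hrem : ∀ᶠ x in 𝓝 a,
      HasFDerivAt (fun x ↦ f x - f' a (x - a) - (1 / 2 : ℝ) • f'' (x - a) (x - a))
        (f' x - f' a - f'' (x - a)) x :=
    hf.mono fun x hx ↦
      (hx.sub ((f' a).hasFDerivAt.comp x ((hasFDerivAt_id x).sub_const a))).sub (hquad x)
  exact (isBigO_pow_succ_of_hasFDerivAt hrem hf').congr_left fun x ↦ by simp; abel

theorem isBigO_fderiv_fderiv_sub_of_contDiffPointwiseHolderAt {α : unitInterval}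
    (hf : ContDiffPointwiseHolderAt 2 α f a) :
    (fun x ↦ fderiv ℝ (fderiv ℝ f) x - fderiv ℝ (fderiv ℝ f) a) =O[𝓝 a]
      fun x ↦ ‖x - a‖ ^ (α : ℝ) := by
  refine .trans (.of_norm_le (g := fun x ↦ ‖iteratedFDeriv ℝ 2 f x - iteratedFDeriv ℝ 2 f a‖)
    fun x ↦ ?_) hf.isBigO.norm_left
  refine ContinuousLinearMap.opNorm_le_bound₂ _ (norm_nonneg _) fun v w ↦ ?_
  simpa [iteratedFDeriv_two_apply, Fin.prod_univ_two, mul_assoc] using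
    (iteratedFDeriv ℝ 2 f x - iteratedFDeriv ℝ 2 f a).le_opNorm ![v, w]

theorem isBigO_taylor_two_of_contDiffPointwiseHolderAt (hf : ContDiffPointwiseHolderAt 2 1 f a) :
    (fun x ↦ f x - f a - fderiv ℝ f a (x - a) -
      (1 / 2 : ℝ) • fderiv ℝ (fderiv ℝ f) a (x - a) (x - a)) =O[𝓝 a] fun x ↦ ‖x - a‖ ^ 3 := by
  have hdf : ContDiffAt ℝ 1 (fderiv ℝ f) a := hf.contDiffAt.fderiv_right (by norm_num)
  refine isBigO_taylor_two one_lt_two ?_ (isBigO_taylor_one ?_ ?_)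
  · exact (hf.contDiffAt.eventually (by simp)).mono fun x hx ↦
      (hx.differentiableAt (by simp)).hasFDerivAt
  · exact (hdf.eventually (by simp)).mono fun x hx ↦ (hx.differentiableAt one_ne_zero).hasFDerivAt
  · simpa using (isBigO_fderiv_fderiv_sub_of_contDiffPointwiseHolderAt hf).norm_right

theorem isBigO_sub_sub_deriv_mul_of_contDiffAt {f : ℝ → ℝ} {a : ℝ} (hf : ContDiffAt ℝ 2 f a) :
    (fun x ↦ f x - f a - deriv f a * (x - a)) =O[𝓝 a] fun x ↦ (x - a) ^ 2 := by
  have hdf : ContDiffAt ℝ 1 (fderiv ℝ f) a := hf.fderiv_right (by norm_num)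
  have := isBigO_taylor_one
    ((hf.eventually (by simp)).mono fun x hx ↦ (hx.differentiableAt two_ne_zero).hasFDerivAt)
    (hdf.differentiableAt one_ne_zero).isBigO_sub
  simpa [fderiv_eq_smul_deriv, mul_comm] using this

end Taylor

/-- The expansion `F r = a + b / r + O(1 / r²)` as `r → ∞`, the shape in which every ingredient of
the critical gauge equations is expanded. -/
def HasExpansionAtTop (F : ℝ → ℝ) (a b : ℝ) : Prop :=
  (fun r ↦ F r - a - b * r⁻¹) =O[atTop] fun r ↦ r⁻¹ ^ 2

namespace HasExpansionAtTop

variable {F : ℝ → ℝ} {a b : ℝ}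

theorem isBigO_sub (h : HasExpansionAtTop F a b) :
    (fun r ↦ F r - a) =O[atTop] fun r ↦ r⁻¹ := by
  have hsq : (fun r : ℝ ↦ r⁻¹ ^ 2) =O[atTop] fun r ↦ r⁻¹ := by
    simpa [sq] using (isBigO_refl (fun r : ℝ ↦ r⁻¹) atTop).mul
      (tendsto_inv_atTop_zero.isBigO_one ℝ)
  exact ((h.trans hsq).add ((isBigO_refl _ _).const_mul_left b)).congr_left fun r ↦ by ring

theorem tendsto (h : HasExpansionAtTop F a b) : Tendsto F atTop (𝓝 a) :=
  tendsto_sub_nhds_zero_iff.1 (h.isBigO_sub.trans_tendsto tendsto_inv_atTop_zero)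

theorem sum {ι : Type*} {s : Finset ι} {F : ι → ℝ → ℝ} {a b : ι → ℝ}
    (h : ∀ i ∈ s, HasExpansionAtTop (F i) (a i) (b i)) :
    HasExpansionAtTop (fun r ↦ ∑ i ∈ s, F i r) (∑ i ∈ s, a i) (∑ i ∈ s, b i) :=
  (IsBigO.sum h).congr_left fun r ↦ by simp [Finset.sum_sub_distrib, Finset.sum_mul]

theorem comp {f : ℝ → ℝ} (hf : ContDiffAt ℝ 2 f a) (h : HasExpansionAtTop F a b) :
    HasExpansionAtTop (fun r ↦ f (F r)) (f a) (deriv f a * b) := by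
  have houter : (fun r ↦ f (F r) - f a - deriv f a * (F r - a)) =O[atTop] fun r ↦ r⁻¹ ^ 2 :=
    ((isBigO_sub_sub_deriv_mul_of_contDiffAt hf).comp_tendsto h.tendsto).trans (h.isBigO_sub.pow 2)
  have hinner : (fun r ↦ deriv f a * (F r - a - b * r⁻¹)) =O[atTop] fun r ↦ r⁻¹ ^ 2 :=
    IsBigO.const_mul_left h (deriv f a)
  exact (houter.add hinner).congr_left fun r ↦ by ring

theorem exp (h : HasExpansionAtTop F a b) :
    HasExpansionAtTop (fun r ↦ Real.exp (F r)) (Real.exp a) (Real.exp a * b) := by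
  simpa using h.comp Real.contDiff_exp.contDiffAt

theorem inv (h : HasExpansionAtTop F a b) (ha : a ≠ 0) :
    HasExpansionAtTop (fun r ↦ (F r)⁻¹) a⁻¹ (-(a ^ 2)⁻¹ * b) := by
  simpa using h.comp (contDiffAt_inv ℝ ha)

theorem exists_forall_nat_abs_le (h : HasExpansionAtTop F a b) :
    ∃ C : ℝ, 0 ≤ C ∧ ∃ n₀ : ℕ, ∀ n : ℕ, n₀ ≤ n → |F n - a - b / n| ≤ C / (n : ℝ) ^ 2 := by
  obtain ⟨C, hC, hbound⟩ := IsBigO.exists_nonneg (h.comp_tendsto tendsto_natCast_atTop_atTop)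
  obtain ⟨n₀, hn₀⟩ := eventually_atTop.1 hbound.bound
  exact ⟨C, hC, n₀, fun n hn ↦ by simpa [div_eq_mul_inv] using hn₀ n hn⟩

end HasExpansionAtTop

theorem hasExpansionAtTop_mul_sub {E : Type*} [NormedAddCommGroup E] [NormedSpace ℝ E]
    {q : E → ℝ} {u : E} (hq : ContDiffPointwiseHolderAt 2 1 q u) (v : E) :
    HasExpansionAtTop (fun r ↦ r * (q (u + r⁻¹ • v) - q u)) (fderiv ℝ q u v)
      (1 / 2 * fderiv ℝ (fderiv ℝ q) u v v) := by
  have hlim : Tendsto (fun r : ℝ ↦ u + r⁻¹ • v) atTop (𝓝 u) := by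
    simpa using ((tendsto_inv_atTop_zero (𝕜 := ℝ)).smul_const v).const_add u
  have hcube : (fun r : ℝ ↦ ‖u + r⁻¹ • v - u‖ ^ 3) =O[atTop] fun r ↦ r⁻¹ ^ 3 :=
    .of_bound (‖v‖ ^ 3) (.of_forall fun r ↦ by simp [norm_smul, mul_pow, mul_comm])
  have htaylor :=
    ((isBigO_taylor_two_of_contDiffPointwiseHolderAt hq).comp_tendsto hlim).trans hcube
  refine ((isBigO_refl (fun r : ℝ ↦ r) atTop).mul htaylor).congr' ?_ ?_ <;>
    filter_upwards [eventually_ne_atTop 0] with r hr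
  · simp only [Function.comp_apply, add_sub_cancel_left, map_smul, smul_eq_mul, smul_apply]
    field_simp
  · field_simp

section Softmax

variable {ι : Type*} [Fintype ι] (x : ι → ℝ)

theorem sum_exp_sub (i : ι) :
    ∑ j, Real.exp (x j - x i) = (∑ k, Real.exp (x k)) / Real.exp (x i) := by
  simp_rw [Real.exp_sub, Finset.sum_div]

theorem sum_inv_sum_exp_sub [Nonempty ι] : ∑ i, (∑ j, Real.exp (x j - x i))⁻¹ = 1 := by
  have hZ : ∑ k, Real.exp (x k) ≠ 0 := by positivity
  simp_rw [sum_exp_sub, inv_div, ← Finset.sum_div]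
  exact div_self hZ

theorem inv_sq_sum_exp_sub_mul_exp_sub (i j : ι) :
    ((∑ k, Real.exp (x k - x i)) ^ 2)⁻¹ * Real.exp (x j - x i) =
      Real.exp (x i + x j) / (∑ k, Real.exp (x k)) ^ 2 := by
  rw [sum_exp_sub, Real.exp_sub, Real.exp_add]
  field_simp

end Softmax

section Gauge

variable {E ι : Type*} [NormedAddCommGroup E] [NormedSpace ℝ E] [Fintype ι]

/-- The left-hand side `C_r(u)` of the critical gauge equations for the directions `e`, with the
integer `n` of the equations replaced by a real scale `r`. -/
noncomputable def gaugeSum (q : E → ℝ) (e : ι → E) (u : E) (r : ℝ) : ℝ :=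
  ∑ i, (∑ j, Real.exp (r * (q (u + r⁻¹ • (e j - e i)) - q u)))⁻¹

/-- The second-order differential operator `𝒟q(u)`, the leading correction to `C_r(u) = 1`. The
pairings `⟨v, ∇q(u)⟩` and `⟨v, Hess q(u) v⟩` are written with `fderiv`, so that no inner product on
`E` is needed. -/
noncomputable def gaugeOperator (q : E → ℝ) (e : ι → E) (u : E) : ℝ :=
  (1 / 2) * ∑ i, ∑ j,
    (Real.exp (fderiv ℝ q u (e i + e j)) / (∑ k, Real.exp (fderiv ℝ q u (e k))) ^ 2) *
      (fderiv ℝ (fderiv ℝ q) u (e j - e i) (e j - e i))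

variable [Nonempty ι] {q : E → ℝ} {u : E}

theorem hasExpansionAtTop_gaugeSum (hq : ContDiffPointwiseHolderAt 2 1 q u) (e : ι → E) :
    HasExpansionAtTop (gaugeSum q e u) 1 (-gaugeOperator q e u) := by
  have hsum : HasExpansionAtTop (gaugeSum q e u) _ _ := .sum fun i _ ↦ .inv
    (.sum fun j _ ↦ (hasExpansionAtTop_mul_sub hq (e j - e i)).exp) (by positivity)
  have hcoeff : ∀ i, -((∑ j, Real.exp (fderiv ℝ q u (e j - e i))) ^ 2)⁻¹ *
      ∑ j, Real.exp (fderiv ℝ q u (e j - e i)) *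
        (1 / 2 * fderiv ℝ (fderiv ℝ q) u (e j - e i) (e j - e i)) =
      -(1 / 2 * ∑ j,
        (Real.exp (fderiv ℝ q u (e i + e j)) / (∑ k, Real.exp (fderiv ℝ q u (e k))) ^ 2) *
          fderiv ℝ (fderiv ℝ q) u (e j - e i) (e j - e i)) := fun i ↦ by
    rw [neg_mul, Finset.mul_sum, Finset.mul_sum]
    congr! 2 with j
    rw [map_add, ← inv_sq_sum_exp_sub_mul_exp_sub (fun k ↦ fderiv ℝ q u (e k))]
    simp only [map_sub (fderiv ℝ q u)]
    ring
  have hconst : ∑ i, (∑ j, Real.exp (fderiv ℝ q u (e j - e i)))⁻¹ = 1 := by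
    simpa only [map_sub] using sum_inv_sum_exp_sub fun k ↦ fderiv ℝ q u (e k)
  simpa only [hconst, hcoeff, Finset.sum_neg_distrib, ← Finset.mul_sum, gaugeOperator] using hsum

theorem expansion_critical_gauge_equations_general (hq : ContDiffPointwiseHolderAt 2 1 q u)
    (e : ι → E) :
    ∃ C : ℝ, 0 ≤ C ∧ ∃ n₀ : ℕ, ∀ n : ℕ, n₀ ≤ n →
      |gaugeSum q e u n - 1 + gaugeOperator q e u / n| ≤ C / (n : ℝ) ^ 2 := by
  simpa only [neg_div, sub_neg_eq_add] using
    (hasExpansionAtTop_gaugeSum hq e).exists_forall_nat_abs_le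

end Gauge

/-- Expansion of the critical gauge equations: if `q` is `C³` on a neighborhood of `u`,
then `C_n(u) := Σ_i (Σ_j exp(n(q(u + (e_j − e_i)/n) − q(u))))⁻¹` satisfies
`C_n(u) = 1 − 𝒟q(u)/n + O(1/n²)`, where
`𝒟q(u) = (1/2) Σ_{i,j} [exp(⟨e_i+e_j, ∇q(u)⟩)/(Σ_k exp(⟨e_k, ∇q(u)⟩))²]
  · ⟨e_j − e_i, Hess q(u) (e_j − e_i)⟩`
(with `⟨e, ∇q(u)⟩` the directional derivative `fderiv ℝ q u e` and the Hessian
quadratic form given by `fderiv ℝ (fderiv ℝ q) u`). -/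
theorem expansion_critical_gauge_equations
    (d D : ℕ) (hd : 1 ≤ d) (hD : 1 ≤ D)
    (e : Fin D → (Fin d → ℝ)) (u : Fin d → ℝ)
    (q : (Fin d → ℝ) → ℝ)
    (hq : ∃ s ∈ nhds u, ContDiffOn ℝ 3 q s) :
    ∃ C : ℝ, 0 ≤ C ∧ ∃ n₀ : ℕ, ∀ n : ℕ, n₀ ≤ n →
      |(∑ i, (∑ j, Real.exp ((n : ℝ) *
            (q (u + ((n : ℝ))⁻¹ • (e j - e i)) - q u)))⁻¹) - 1 +
          ((1 / 2) * ∑ i, ∑ j,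
            (Real.exp (fderiv ℝ q u (e i + e j)) /
              (∑ k, Real.exp (fderiv ℝ q u (e k))) ^ 2) *
            (fderiv ℝ (fderiv ℝ q) u (e j - e i) (e j - e i))) / (n : ℝ)|
        ≤ C / (n : ℝ) ^ 2 := by
  obtain ⟨s, hs, hqs⟩ := hq
  have := Fin.pos_iff_nonempty.1 hD
  exact expansion_critical_gauge_equations_general
    ((hqs.contDiffAt hs).contDiffPointwiseHolderAt (by norm_num) 1) e
end

section
/- Critical gauge of the Aztec diamond: for every n ≥ 1, the functions f and g satisfy the critical gauge equations at every vertex of AD(n): for all integers 0 ≤ i ≤ n−1 and 0 ≤ j ≤ n, f(i,j) · Σ g(i',j') = 1, where the sum is over the black neighbors (i',j') ∈ {(i,j), (i+1,j), (i,j−1), (i+1,j−1)} with 0 ≤ i' ≤ n and 0 ≤ j' ≤ n−1; and for all integers 0 ≤ i ≤ n and 0 ≤ j ≤ n−1, g(i,j) · Σ f(i',j') = 1, where the sum is over the white neighbors (i',j') ∈ {(i,j), (i−1,j), (i,j+1), (i−1,j+1)} with 0 ≤ i' ≤ n−1 and 0 ≤ j' ≤ n. -/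
/-- The critical gauge function on white vertices of the Aztec diamond `AD(n)`:
`f(i,j) = (n/(n+1)) · C(n−1,i)/C(n,j)`. -/
noncomputable def aztecF (n i j : ℕ) : ℝ :=
  ((n : ℝ) / ((n : ℝ) + 1)) * (Nat.choose (n - 1) i : ℝ) / (Nat.choose n j : ℝ)

/-- The critical gauge function on black vertices of the Aztec diamond `AD(n)`:
`g(i,j) = C(n−1,j)/C(n,i)`. -/
noncomputable def aztecG (n i j : ℕ) : ℝ :=
  (Nat.choose (n - 1) j : ℝ) / (Nat.choose n i : ℝ)

/-!
The black neighbors of the white vertex `(i, j)` form two pairs, each with a common second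
coordinate. Adding `g` over a pair amounts to the identity
`1 / C(m+1, i) + 1 / C(m+1, i+1) = (m+2) / ((m+1) C(m, i))`, with `m = n - 1`, underlying Leibniz's
harmonic triangle, and adding the two pairs amounts to Pascal's rule; a pair that leaves the diamond
would contribute zero anyway. The total is `1 / f(i, j)`. Around a black vertex the coordinates
exchange roles.
-/

section BinomialIdentities

variable {m : ℕ}

theorem inv_choose_add_inv_choose_succ {K : Type*} [Field K] [CharZero K] {k : ℕ} (hk : k ≤ m) :
    ((m + 1).choose k : K)⁻¹ + ((m + 1).choose (k + 1) : K)⁻¹ =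
      (m + 2) / ((m + 1) * m.choose k) := by
  obtain ⟨l, rfl⟩ := Nat.exists_eq_add_of_le hk
  have left : ((k + l + 1 : ℕ) : K) * (k + l).choose k = (k + l + 1).choose k * (l + 1 : ℕ) := by
    have h := Nat.choose_mul_succ_eq (k + l) k
    rw [show k + l + 1 - k = l + 1 by lia, mul_comm] at h
    exact_mod_cast h
  have right :
      ((k + l + 1 : ℕ) : K) * (k + l).choose k = (k + l + 1).choose (k + 1) * (k + 1 : ℕ) := by
    exact_mod_cast Nat.add_one_mul_choose_eq (k + l) k
  have inv_left : ((k + l + 1).choose k : K)⁻¹ =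
      (l + 1 : ℕ) / ((k + l + 1 : ℕ) * (k + l).choose k) := by
    rw [left, div_mul_cancel_right₀ (Nat.cast_ne_zero.2 l.succ_ne_zero)]
  have inv_right : ((k + l + 1).choose (k + 1) : K)⁻¹ =
      (k + 1 : ℕ) / ((k + l + 1 : ℕ) * (k + l).choose k) := by
    rw [right, div_mul_cancel_right₀ (Nat.cast_ne_zero.2 k.succ_ne_zero)]
  rw [inv_left, inv_right, ← add_div]
  push_cast
  ring

theorem ite_choose_mul_add_ite_choose_pred_mul {R : Type*} [NonAssocSemiring R] (k : ℕ) (x : R) :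
    (if k ≤ m then m.choose k * x else 0) + (if 1 ≤ k then m.choose (k - 1) * x else 0) =
      (m + 1).choose k * x := by
  have in_range : (if k ≤ m then m.choose k * x else 0) = m.choose k * x :=
    ite_eq_left_iff.2 fun h ↦ by simp [Nat.choose_eq_zero_of_lt (not_le.1 h)]
  rw [in_range]
  cases k with
  | zero => simp
  | succ k => simp [Nat.choose_succ_succ', add_mul, add_comm]

end BinomialIdentities

section AztecDiamond

variable {m i j : ℕ}

theorem aztecF_ne_zero (hi : i ≤ m) (hj : j ≤ m + 1) : aztecF (m + 1) i j ≠ 0 :=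
  div_ne_zero (mul_ne_zero (by positivity) (Nat.cast_ne_zero.2 (Nat.choose_ne_zero hi)))
    (Nat.cast_ne_zero.2 (Nat.choose_ne_zero hj))

theorem aztecG_ne_zero (hi : i ≤ m + 1) (hj : j ≤ m) : aztecG (m + 1) i j ≠ 0 :=
  div_ne_zero (Nat.cast_ne_zero.2 (Nat.choose_ne_zero hj))
    (Nat.cast_ne_zero.2 (Nat.choose_ne_zero hi))

theorem aztecF_add_aztecF_succ (i : ℕ) (hj : j ≤ m) :
    aztecF (m + 1) i j + aztecF (m + 1) i (j + 1) = m.choose i * (m.choose j : ℝ)⁻¹ := by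
  simp only [aztecF, Nat.add_sub_cancel, div_eq_mul_inv _ (Nat.cast (Nat.choose _ _) : ℝ)]
  rw [← mul_add, inv_choose_add_inv_choose_succ hj]
  push_cast
  field_simp
  ring

theorem aztecG_add_aztecG_succ (hi : i ≤ m) (j : ℕ) :
    aztecG (m + 1) i j + aztecG (m + 1) (i + 1) j =
      m.choose j * ((m + 2) / ((m + 1) * m.choose i)) := by
  simp only [aztecG, Nat.add_sub_cancel, div_eq_mul_inv _ (Nat.cast (Nat.choose _ _) : ℝ)]
  rw [← mul_add, inv_choose_add_inv_choose_succ hi]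

theorem neighbor_sum_aztecG_eq_inv_aztecF (hi : i ≤ m) (j : ℕ) :
    (if j ≤ m then aztecG (m + 1) i j + aztecG (m + 1) (i + 1) j else 0) +
        (if 1 ≤ j then aztecG (m + 1) i (j - 1) + aztecG (m + 1) (i + 1) (j - 1) else 0) =
      (aztecF (m + 1) i j)⁻¹ := by
  simp only [aztecG_add_aztecG_succ hi]
  rw [ite_choose_mul_add_ite_choose_pred_mul, aztecF, Nat.add_sub_cancel]
  push_cast
  field_simp
  ring

theorem neighbor_sum_aztecF_eq_inv_aztecG (i : ℕ) (hj : j ≤ m) :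
    (if i ≤ m then aztecF (m + 1) i j + aztecF (m + 1) i (j + 1) else 0) +
        (if 1 ≤ i then aztecF (m + 1) (i - 1) j + aztecF (m + 1) (i - 1) (j + 1) else 0) =
      (aztecG (m + 1) i j)⁻¹ := by
  simp only [aztecF_add_aztecF_succ _ hj]
  rw [ite_choose_mul_add_ite_choose_pred_mul, aztecG, Nat.add_sub_cancel, inv_div, div_eq_mul_inv]

end AztecDiamond

/-- Critical gauge of the Aztec diamond: for every `n ≥ 1` the functions `f` and `g`
satisfy the critical gauge equations at every white vertex (`0 ≤ i ≤ n−1`, `0 ≤ j ≤ n`)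
and every black vertex (`0 ≤ i ≤ n`, `0 ≤ j ≤ n−1`), where the sums run over the
neighbors that lie in range. -/
theorem aztec_diamond_critical_gauge (n : ℕ) (hn : 1 ≤ n) :
    (∀ i j : ℕ, i ≤ n - 1 → j ≤ n →
      aztecF n i j *
          ((if j ≤ n - 1 then aztecG n i j + aztecG n (i + 1) j else 0) +
            (if 1 ≤ j then aztecG n i (j - 1) + aztecG n (i + 1) (j - 1) else 0)) = 1) ∧
    (∀ i j : ℕ, i ≤ n → j ≤ n - 1 →
      aztecG n i j *
          ((if i ≤ n - 1 then aztecF n i j + aztecF n i (j + 1) else 0) +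
            (if 1 ≤ i then aztecF n (i - 1) j + aztecF n (i - 1) (j + 1) else 0)) = 1) := by
  obtain ⟨m, rfl⟩ := Nat.exists_eq_add_of_le' hn
  simp only [Nat.add_sub_cancel]
  constructor
  · intro i j hi hj
    rw [neighbor_sum_aztecG_eq_inv_aztecF hi, mul_inv_cancel₀ (aztecF_ne_zero hi hj)]
  · intro i j hi hj
    rw [neighbor_sum_aztecF_eq_inv_aztecG _ hj, mul_inv_cancel₀ (aztecG_ne_zero hi hj)]
end

section
/- The limiting gauge function of the Aztec diamond solves the gauge PDE: the function H(x,y) = x·log x + (1−x)·log(1−x) − y·log y − (1−y)·log(1−y) satisfies, at every point of the open square (0,1)², the equation e^{H_x}·H_{xx}/(1+e^{H_x})² + e^{H_y}·H_{yy}/(1+e^{H_y})² = 0, where H_x, H_y denote first partial derivatives and H_{xx}, H_{yy} second partial derivatives of H. -/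
/-- The limiting gauge function of the Aztec diamond:
`H(x,y) = x log x + (1−x) log(1−x) − y log y − (1−y) log(1−y)`. -/
noncomputable def aztecGauge (x y : ℝ) : ℝ :=
  x * Real.log x + (1 - x) * Real.log (1 - x) -
    y * Real.log y - (1 - y) * Real.log (1 - y)

/-!
The map `a ↦ eᵃ / (1 + eᵃ)²` is the derivative of the logistic function `σ`, so the gauge equation
has the divergence form `∂ₓ σ(H_x) + ∂_y σ(H_y) = 0`. The gauge function is a difference of two
binary entropies, whose derivatives are logits up to sign, and `σ` inverts the logit: hence
`σ(H_x) = x` and `σ(H_y) = 1 - y`.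
-/

open Real Set

lemma exp_div_one_add_exp_sq (a : ℝ) :
    exp a / (1 + exp a) ^ 2 = sigmoid a * (1 - sigmoid a) := by
  rw [sigmoid_def, exp_neg]
  field

lemma deriv_sigmoid_comp {g : ℝ → ℝ} {x : ℝ} (hg : DifferentiableAt ℝ g x) :
    deriv (fun s => sigmoid (g s)) x = exp (g x) * deriv g x / (1 + exp (g x)) ^ 2 := by
  calc deriv (fun s => sigmoid (g s)) x
      = deriv sigmoid (g x) * deriv g x := deriv_comp x differentiableAt_sigmoid hg
    _ = exp (g x) / (1 + exp (g x)) ^ 2 * deriv g x := by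
      rw [deriv_sigmoid, exp_div_one_add_exp_sq]
    _ = exp (g x) * deriv g x / (1 + exp (g x)) ^ 2 := div_mul_eq_mul_div _ _ _

lemma differentiableAt_deriv_binEntropy {p : ℝ} (hp₀ : p ≠ 0) (hp₁ : p ≠ 1) :
    DifferentiableAt ℝ (deriv binEntropy) p := by
  have hlogit : deriv binEntropy = fun s => log (1 - s) - log s := funext deriv_binEntropy
  have h1p : 1 - p ≠ 0 := sub_ne_zero.2 hp₁.symm
  rw [hlogit]
  fun_prop (disch := assumption)

lemma sigmoid_deriv_binEntropy {p : ℝ} (hp : p ∈ Ioo (0 : ℝ) 1) :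
    sigmoid (deriv binEntropy p) = 1 - p := by
  have hp₀ : 0 < p := hp.1
  have h1p : 0 < 1 - p := sub_pos.2 hp.2
  rw [deriv_binEntropy, sigmoid_def, neg_sub, exp_sub, exp_log hp₀, exp_log h1p]
  field

lemma deriv_sigmoid_deriv_binEntropy {p : ℝ} (hp : p ∈ Ioo (0 : ℝ) 1) :
    deriv (fun s => sigmoid (deriv binEntropy s)) p = -1 := by
  have hlin : EqOn (fun s => sigmoid (deriv binEntropy s)) (fun s => 1 - s) (Ioo 0 1) :=
    fun _ hs => sigmoid_deriv_binEntropy hs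
  rw [(hlin.eventuallyEq_of_mem (isOpen_Ioo.mem_nhds hp)).deriv_eq]
  simp

lemma aztecGauge_eq_binEntropy_sub (x y : ℝ) :
    aztecGauge x y = binEntropy y - binEntropy x := by
  simp only [aztecGauge, binEntropy, log_inv]
  ring

lemma deriv_aztecGauge_left (y : ℝ) :
    deriv (fun s => aztecGauge s y) = fun s => -deriv binEntropy s := by
  simp only [aztecGauge_eq_binEntropy_sub, deriv_const_sub']

lemma deriv_aztecGauge_right (x : ℝ) :
    deriv (fun t => aztecGauge x t) = deriv binEntropy := by
  simp only [aztecGauge_eq_binEntropy_sub, deriv_sub_const_fun]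

/-- The limiting gauge function of the Aztec diamond solves the gauge PDE: at every
point of the open unit square,
`e^{H_x}·H_{xx}/(1+e^{H_x})² + e^{H_y}·H_{yy}/(1+e^{H_y})² = 0`,
where subscripts denote partial derivatives. -/
theorem aztec_gauge_solves_gauge_PDE
    (x y : ℝ) (hx : x ∈ Set.Ioo (0 : ℝ) 1) (hy : y ∈ Set.Ioo (0 : ℝ) 1) :
    Real.exp (deriv (fun s => aztecGauge s y) x) *
        deriv (deriv (fun s => aztecGauge s y)) x /
        (1 + Real.exp (deriv (fun s => aztecGauge s y) x)) ^ 2 +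
      Real.exp (deriv (fun t => aztecGauge x t) y) *
        deriv (deriv (fun t => aztecGauge x t)) y /
        (1 + Real.exp (deriv (fun t => aztecGauge x t) y)) ^ 2 = 0 := by
  have hdx := differentiableAt_deriv_binEntropy hx.1.ne' hx.2.ne
  have hdy := differentiableAt_deriv_binEntropy hy.1.ne' hy.2.ne
  have flux_x : deriv (fun s => sigmoid (-deriv binEntropy s)) x = 1 := by
    simp only [sigmoid_neg, deriv_const_sub, deriv_sigmoid_deriv_binEntropy hx, neg_neg]
  have flux_y : deriv (fun t => sigmoid (deriv binEntropy t)) y = -1 :=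
    deriv_sigmoid_deriv_binEntropy hy
  rw [deriv_aztecGauge_left, deriv_aztecGauge_right, ← deriv_sigmoid_comp hdx.fun_neg,
    ← deriv_sigmoid_comp hdy, flux_x, flux_y, add_neg_cancel]
end

section
/- Critical gauge of the truncated quadrant in the honeycomb lattice: for every integer K ≥ 1 the functions w and b satisfy the critical gauge equations at every vertex: for all integers i, j ≥ 0 with i + j ≥ K − 1, w(i,j) · ( [i+j ≥ K]·b(i,j) + b(i+1,j) + b(i,j+1) ) = 1, where the term b(i,j) is included only when i + j ≥ K; and for all integers i, j ≥ 0 with i + j ≥ K, b(i,j) · ( w(i,j) + [i ≥ 1]·w(i−1,j) + [j ≥ 1]·w(i,j−1) ) = 1, where the terms w(i−1,j), w(i,j−1) are included only when the corresponding coordinate is ≥ 1. -/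
/-- The critical gauge function on black vertices of the truncated quadrant in the
honeycomb lattice: `b(i,j) = K^{i+j} / (C(i+j,j) · (i+j+1) · (i+j−K)!)`. -/
noncomputable def tqB (K i j : ℕ) : ℝ :=
  (K : ℝ) ^ (i + j) /
    ((Nat.choose (i + j) j : ℝ) * ((i + j + 1 : ℕ) : ℝ) *
      (Nat.factorial (i + j - K) : ℝ))

/-- The critical gauge function on white vertices of the truncated quadrant in the
honeycomb lattice: `w(i,j) = C(i+j,j) · (i+j+1−K)! / K^{i+j}`. -/
noncomputable def tqW (K i j : ℕ) : ℝ :=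
  (Nat.choose (i + j) j : ℝ) * (Nat.factorial (i + j + 1 - K) : ℝ) / (K : ℝ) ^ (i + j)

/-!
Call `w · b` the weight of the edge joining a white vertex `w` to a black vertex `b`. Factorials
and binomial coefficients cancel along every edge, so with `n = i + j` the edges at the white
vertex `(i,j)` have rational weights: `(n + 1 - K) / (n + 1)` towards `(i,j)`,
`K (i + 1) / ((n + 1) (n + 2))` towards `(i+1,j)` and `K (j + 1) / ((n + 1) (n + 2))` towards
`(i,j+1)`. Around every vertex the last two kinds add up to `K / (n + 1)` and the first kind
supplies the remaining `(n + 1 - K) / (n + 1)`. The weights vanish exactly on the edges that leave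
the region, so boundary vertices obey the same computation.
-/

theorem tqB_comm (K i j : ℕ) : tqB K i j = tqB K j i := by
  rw [tqB, tqB, add_comm j i, Nat.choose_symm_add]

theorem tqW_comm (K i j : ℕ) : tqW K i j = tqW K j i := by
  rw [tqW, tqW, add_comm j i, Nat.choose_symm_add]

section EdgeWeights

variable {K : ℕ}

theorem tqW_mul_tqB (hK : K ≠ 0) {i j : ℕ} (hij : K ≤ i + j) :
    tqW K i j * tqB K i j = ((i : ℝ) + j + 1 - K) / (i + j + 1) := by
  have choose_ne_zero : ((i + j).choose j : ℝ) ≠ 0 :=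
    Nat.cast_ne_zero.2 (Nat.choose_pos (Nat.le_add_left j i)).ne'
  have factorial_succ : ((i + j + 1 - K).factorial : ℝ) =
      ((i : ℝ) + j + 1 - K) * (i + j - K).factorial := by
    rw [Nat.succ_sub hij, Nat.factorial_succ]
    push_cast [Nat.cast_sub hij]
    ring
  rw [tqW, tqB, factorial_succ]
  push_cast
  field_simp

theorem tqW_mul_tqB_add_one_right (hK : K ≠ 0) (i j : ℕ) :
    tqW K i j * tqB K i (j + 1) = K * ((j : ℝ) + 1) / ((i + j + 1) * (i + j + 2)) := by
  have choose_ne_zero : ((i + j + 1).choose (j + 1) : ℝ) ≠ 0 :=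
    Nat.cast_ne_zero.2 (Nat.choose_pos (by omega)).ne'
  have absorption :
      ((i : ℝ) + j + 1) * (i + j).choose j = (i + j + 1).choose (j + 1) * ((j : ℝ) + 1) := by
    exact_mod_cast Nat.add_one_mul_choose_eq (i + j) j
  simp only [tqW, tqB, ← add_assoc, pow_succ]
  push_cast
  field_simp
  linear_combination ((i : ℝ) + j + 2) * absorption

theorem tqW_mul_tqB_add_one_left (hK : K ≠ 0) (i j : ℕ) :
    tqW K i j * tqB K (i + 1) j = K * ((i : ℝ) + 1) / ((i + j + 1) * (i + j + 2)) := by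
  rw [tqW_comm, tqB_comm, tqW_mul_tqB_add_one_right hK, add_comm (j : ℝ)]

theorem tqW_mul_ite_tqB (hK : K ≠ 0) {i j : ℕ} (hij : K ≤ i + j + 1) :
    tqW K i j * (if K ≤ i + j then tqB K i j else 0) =
      ((i : ℝ) + j + 1 - K) / (i + j + 1) := by
  split_ifs with h
  · exact tqW_mul_tqB hK h
  · obtain rfl : K = i + j + 1 := by omega
    simp

theorem ite_tqW_sub_one_right_mul_tqB (hK : K ≠ 0) (i j : ℕ) :
    (if 1 ≤ j then tqW K i (j - 1) else 0) * tqB K i j =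
      K * (j : ℝ) / ((i + j) * (i + j + 1)) := by
  cases j with
  | zero => simp
  | succ j =>
    rw [if_pos (Nat.le_add_left 1 j), Nat.add_sub_cancel, tqW_mul_tqB_add_one_right hK]
    push_cast
    ring

theorem ite_tqW_sub_one_left_mul_tqB (hK : K ≠ 0) (i j : ℕ) :
    (if 1 ≤ i then tqW K (i - 1) j else 0) * tqB K i j =
      K * (i : ℝ) / ((i + j) * (i + j + 1)) := by
  rw [tqW_comm, tqB_comm, ite_tqW_sub_one_right_mul_tqB hK, add_comm (j : ℝ)]

end EdgeWeights

/-- Critical gauge of the truncated quadrant in the honeycomb lattice: for every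
`K ≥ 1`, the functions `w` and `b` satisfy the critical gauge equations at every white
vertex (`i + j ≥ K − 1`) and every black vertex (`i + j ≥ K`), where a neighbor's term
is included exactly when the neighbor lies in the region. -/
theorem truncated_quadrant_critical_gauge (K : ℕ) (hK : 1 ≤ K) :
    (∀ i j : ℕ, K - 1 ≤ i + j →
      tqW K i j *
          ((if K ≤ i + j then tqB K i j else 0) + tqB K (i + 1) j + tqB K i (j + 1)) = 1) ∧
    (∀ i j : ℕ, K ≤ i + j →
      tqB K i j *
          (tqW K i j + (if 1 ≤ i then tqW K (i - 1) j else 0) +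
            (if 1 ≤ j then tqW K i (j - 1) else 0)) = 1) := by
  have hK₀ : K ≠ 0 := Nat.one_le_iff_ne_zero.1 hK
  constructor
  · intro i j hij
    rw [mul_add, mul_add, tqW_mul_ite_tqB hK₀ (Nat.sub_le_iff_le_add.1 hij),
      tqW_mul_tqB_add_one_left hK₀, tqW_mul_tqB_add_one_right hK₀]
    field_simp
    ring
  · intro i j hij
    have sum_ne_zero : (i : ℝ) + j ≠ 0 := by
      exact_mod_cast (Nat.lt_of_lt_of_le hK hij).ne'
    rw [mul_comm, add_mul, add_mul, tqW_mul_tqB hK₀ hij,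
      ite_tqW_sub_one_left_mul_tqB hK₀, ite_tqW_sub_one_right_mul_tqB hK₀]
    field_simp
    ring
end
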